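/- Let k ≥ 3 be an integer with k ∉ {4,5}. For all sufficiently large n, if G is an n-vertex W_{2k+1}-free simple graph attaining the maximum spectral radius among all n-vertex W_{2k+1}-free graphs, V(G) = L ⊔ R is a maximum cut of G, and L contains a vertex of internal degree k − 1, then there are at least 4k² + 1 vertices v ∈ L with d_L(v) = k − 1, and the induced subgraph G[R] contains at most one edge. -/

import Mathlib

/-- The wheel graph on `t` vertices: vertex `0` joined to every vertex of the
cycle `1, 2, …, t-1` (with `t-1` adjacent to `1`). -/
def wheelGraph (t : ℕ) : SimpleGraph (Fin t) where
  Adj a b := a ≠ b ∧ (a.val = 0 ∨ b.val = 0 ∨ a.val + 1 = b.val ∨ b.val + 1 = a.val ∨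
      (a.val = 1 ∧ b.val = t - 1) ∨ (b.val = 1 ∧ a.val = t - 1))
  symm := by
    constructor
    intro a b h
    exact ⟨h.1.symm, by tauto⟩
  loopless := by
    constructor
    intro a h
    exact h.1 rfl

/-- `G` contains a copy of `F`, i.e. a subgraph isomorphic to `F`. -/
def ContainsCopy {α β : Type*} (F : SimpleGraph α) (G : SimpleGraph β) : Prop :=
  ∃ f : α ↪ β, ∀ a b, F.Adj a b → G.Adj (f a) (f b)

/-- `G` is `W_t`-free: it contains no subgraph isomorphic to the wheel on `t` vertices. -/
def WheelFree (t : ℕ) {n : ℕ} (G : SimpleGraph (Fin n)) : Prop :=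
  ¬ ContainsCopy (wheelGraph t) G

/-- The spectral radius of `G`: the largest eigenvalue of its adjacency matrix. -/
noncomputable def lam1 {n : ℕ} (G : SimpleGraph (Fin n)) : ℝ := by
  classical
  exact sSup {μ : ℝ | Module.End.HasEigenvalue (Matrix.toLin' (G.adjMatrix ℝ)) μ}

/-- The number of edges of a graph on a finite vertex type. -/
noncomputable def edgeCount {V : Type*} [Fintype V] (G : SimpleGraph V) : ℕ := by
  classical
  exact G.edgeFinset.card

/-- The degree of a vertex. -/
noncomputable def deg {n : ℕ} (G : SimpleGraph (Fin n)) (v : Fin n) : ℕ := by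
  classical
  exact G.degree v

/-- The number of neighbours of `v` inside the set `A`. -/
noncomputable def degIn {n : ℕ} (G : SimpleGraph (Fin n)) (A : Finset (Fin n)) (v : Fin n) : ℕ := by
  classical
  exact (A.filter fun u => G.Adj v u).card

/-- The number of edges of `G` with one endpoint in `S` and the other outside `S`. -/
noncomputable def cutCount {n : ℕ} (G : SimpleGraph (Fin n)) (S : Finset (Fin n)) : ℕ := by
  classical
  exact ((Finset.univ : Finset (Fin n × Fin n)).filter
    fun p => G.Adj p.1 p.2 ∧ p.1 ∈ S ∧ p.2 ∉ S).card

/-- `(S, T)` is a maximum cut of `G`. -/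
def IsMaxCut {n : ℕ} (G : SimpleGraph (Fin n)) (S T : Finset (Fin n)) : Prop :=
  T = Sᶜ ∧ ∀ S' : Finset (Fin n), cutCount G S' ≤ cutCount G S

/-- `G` attains the maximum spectral radius among all `n`-vertex `W_t`-free graphs. -/
def IsSpexWheel (t : ℕ) {n : ℕ} (G : SimpleGraph (Fin n)) : Prop :=
  WheelFree t G ∧ ∀ H : SimpleGraph (Fin n), WheelFree t H → lam1 H ≤ lam1 G

/-- `G` attains the maximum number of edges among all `n`-vertex `W_t`-free graphs. -/
def IsExWheel (t : ℕ) {n : ℕ} (G : SimpleGraph (Fin n)) : Prop :=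
  WheelFree t G ∧ ∀ H : SimpleGraph (Fin n), WheelFree t H → edgeCount H ≤ edgeCount G


namespace WheelAux
open Finset
open scoped Classical

/-- A hub joined to a cycle given by a function on naturals gives a wheel. -/
lemma copy_of_cycle {n k : ℕ} (hk : 2 ≤ k) (G : SimpleGraph (Fin n)) (v : Fin n) (c : ℕ → Fin n)
    (inj : ∀ i j, i < 2 * k → j < 2 * k → c i = c j → i = j)
    (hv : ∀ i, i < 2 * k → G.Adj v (c i))
    (hc : ∀ i, i + 1 < 2 * k → G.Adj (c i) (c (i + 1)))
    (hl : G.Adj (c (2 * k - 1)) (c 0)) : ContainsCopy (wheelGraph (2 * k + 1)) G := by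
  refine ⟨⟨fun a => if a.val = 0 then v else c (a.val - 1), ?_⟩, ?_⟩
  · intro a b hab
    have ha := a.isLt
    have hb := b.isLt
    apply Fin.ext
    by_cases h1 : a.val = 0 <;> by_cases h2 : b.val = 0
    · omega
    · simp only [h1, h2, if_true, if_false] at hab
      exact absurd (hv (b.val - 1) (by omega)) (by rw [← hab]; exact G.loopless.irrefl v)
    · simp only [h1, h2, if_true, if_false] at hab
      exact absurd (hv (a.val - 1) (by omega)) (by rw [hab]; exact G.loopless.irrefl v)
    · simp only [h1, h2, if_false] at hab
      have := inj _ _ (by omega) (by omega) hab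
      omega
  · intro a b hab
    have ha := a.isLt
    have hb := b.isLt
    obtain ⟨hne, h⟩ := hab
    have hne' : a.val ≠ b.val := fun h => hne (Fin.ext h)
    show G.Adj (if a.val = 0 then v else c (a.val - 1)) (if b.val = 0 then v else c (b.val - 1))
    by_cases h1 : a.val = 0 <;> by_cases h2 : b.val = 0
    · omega
    · simp only [h1, h2, if_true, if_false]
      exact hv _ (by omega)
    · simp only [h1, h2, if_true, if_false]
      exact (hv _ (by omega)).symm
    · simp only [h1, h2, if_false]
      rcases h with h | h | h | h | h | h
      · omega
      · omega
      · have := hc (a.val - 1) (by omega)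
        rwa [show a.val - 1 + 1 = b.val - 1 by omega] at this
      · have := hc (b.val - 1) (by omega)
        rw [show b.val - 1 + 1 = a.val - 1 by omega] at this
        exact this.symm
      · rw [h.1, h.2]
        exact hl.symm
      · rw [h.1, h.2]
        exact hl

/-- Enumerate a finset by naturals. -/
lemma enum {α : Type*} [Nonempty α] (A : Finset α) (m : ℕ) (h : m ≤ A.card) :
    ∃ a : ℕ → α, (∀ i, i < m → a i ∈ A) ∧ ∀ i j, i < m → j < m → a i = a j → i = j := by
  have e := A.equivFin.symm
  refine ⟨fun i => if h : i < A.card then (e ⟨i, h⟩ : α) else Classical.arbitrary α, ?_, ?_⟩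
  · intro i hi
    simp only [show i < A.card by omega, dif_pos]
    exact (e _).2
  · intro i j hi hj hij
    simp only [show i < A.card by omega, show j < A.card by omega, dif_pos] at hij
    have := e.injective (Subtype.ext hij)
    simpa using this

/-- A hub joined to both sides of a complete bipartite graph. -/
lemma copy_of_bip {n k : ℕ} (hk : 2 ≤ k) (G : SimpleGraph (Fin n)) (v : Fin n)
    (A B : Finset (Fin n)) (hA : k ≤ A.card) (hB : k ≤ B.card)
    (hvA : ∀ a ∈ A, G.Adj v a) (hvB : ∀ b ∈ B, G.Adj v b)
    (hAB : ∀ a ∈ A, ∀ b ∈ B, G.Adj a b) : ContainsCopy (wheelGraph (2 * k + 1)) G := by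
  have : Nonempty (Fin n) := ⟨v⟩
  obtain ⟨a, haA, hai⟩ := enum A k hA
  obtain ⟨b, hbB, hbi⟩ := enum B k hB
  have hne : ∀ i j, i < k → j < k → a i ≠ b j := fun i j hi hj =>
    (hAB _ (haA i hi) _ (hbB j hj)).ne
  refine copy_of_cycle hk G v (fun i => if i % 2 = 0 then a (i / 2) else b (i / 2)) ?_ ?_ ?_ ?_
  · intro i j hi hj hij
    by_cases h1 : i % 2 = 0 <;> by_cases h2 : j % 2 = 0 <;>
      simp only [h1, h2, if_true, if_false] at hij
    · have := hai _ _ (by omega) (by omega) hij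
      omega
    · exact absurd hij (hne _ _ (by omega) (by omega))
    · exact absurd hij.symm (hne _ _ (by omega) (by omega))
    · have := hbi _ _ (by omega) (by omega) hij
      omega
  · intro i hi
    by_cases h1 : i % 2 = 0 <;> simp only [h1, if_true, if_false]
    · exact hvA _ (haA _ (by omega))
    · exact hvB _ (hbB _ (by omega))
  · intro i hi
    by_cases h1 : i % 2 = 0
    · have h2 : ¬ ((i + 1) % 2 = 0) := by omega
      simp only [h1, h2, if_true, if_false]
      exact hAB _ (haA _ (by omega)) _ (hbB _ (by omega))
    · have h2 : ((i + 1) % 2 = 0) := by omega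
      simp only [h1, h2, if_true, if_false]
      exact (hAB _ (haA _ (by omega)) _ (hbB _ (by omega))).symm
  · have h2 : ¬ ((2 * k - 1) % 2 = 0) := by omega
    simp only [h2, if_false]
    simp only [if_true]
    exact (hAB _ (haA _ (by omega)) _ (hbB _ (by omega))).symm

/-- A hub, six consecutive vertices `w`, then alternate between `C` and `a`. -/
lemma copy_of_six {n k : ℕ} (hk : 3 ≤ k) (G : SimpleGraph (Fin n)) (v : Fin n)
    (w a : ℕ → Fin n) (C : Finset (Fin n))
    (hwi : ∀ i j, i < 6 → j < 6 → w i = w j → i = j)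
    (hai : ∀ i j, i < k - 1 → j < k - 1 → a i = a j → i = j)
    (hwa : ∀ i j, i < 6 → 2 ≤ j → j < k - 1 → w i ≠ a j)
    (hw5 : w 5 = a 1)
    (hvw : ∀ i, i < 6 → G.Adj v (w i)) (hva : ∀ i, i < k - 1 → G.Adj v (a i))
    (hww : ∀ i, i < 5 → G.Adj (w i) (w (i + 1)))
    (haw : ∀ i, i < k - 1 → G.Adj (a i) (w 0))
    (hC : k + 6 ≤ C.card) (hvC : ∀ c ∈ C, G.Adj v c)
    (haC : ∀ i, i < k - 1 → ∀ c ∈ C, G.Adj (a i) c) :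
    ContainsCopy (wheelGraph (2 * k + 1)) G := by
  have : Nonempty (Fin n) := ⟨v⟩
  have hC' : k ≤ (C \ (Finset.range 6).image w).card := by
    have h1 := Finset.le_card_sdiff ((Finset.range 6).image w) C
    have h2 : ((Finset.range 6).image w).card ≤ 6 := by
      simpa using Finset.card_image_le (s := Finset.range 6) (f := w)
    omega
  obtain ⟨r, hrC, hri⟩ := enum _ k hC'
  have hr1 : ∀ i, i < k → r i ∈ C := fun i hi => (Finset.mem_sdiff.1 (hrC i hi)).1
  have hr2 : ∀ i j, i < k → j < 6 → r i ≠ w j := fun i j hi hj h =>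
    (Finset.mem_sdiff.1 (hrC i hi)).2 (Finset.mem_image.2 ⟨j, Finset.mem_range.2 hj, h.symm⟩)
  have hra : ∀ i j, i < k → j < k - 1 → r i ≠ a j := fun i j hi hj =>
    (haC j hj _ (hr1 i hi)).ne'
  refine copy_of_cycle (by omega) G v
    (fun i => if i < 6 then w i else if i % 2 = 0 then r (i / 2) else a (i / 2 - 1)) ?_ ?_ ?_ ?_
  · intro i j hi hj hij
    by_cases h1 : i < 6 <;> by_cases h2 : j < 6 <;> by_cases h3 : i % 2 = 0 <;>
      by_cases h4 : j % 2 = 0 <;> simp only [h1, h2, h3, h4, if_true, if_false] at hij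
    all_goals first
      | exact hwi _ _ h1 h2 hij
      | exact absurd hij (hwa _ _ (by omega) (by omega) (by omega))
      | exact absurd hij.symm (hwa _ _ (by omega) (by omega) (by omega))
      | exact absurd hij (hr2 _ _ (by omega) (by omega))
      | exact absurd hij.symm (hr2 _ _ (by omega) (by omega))
      | exact absurd hij (hra _ _ (by omega) (by omega))
      | exact absurd hij.symm (hra _ _ (by omega) (by omega))
      | (have := hri _ _ (by omega) (by omega) hij
         omega)
      | (have := hai _ _ (by omega) (by omega) hij
         omega)
  · intro i hi
    by_cases h1 : i < 6 <;> by_cases h3 : i % 2 = 0 <;> simp only [h1, h3, if_true, if_false]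
    all_goals first
      | exact hvw _ h1
      | exact hvC _ (hr1 _ (by omega))
      | exact hva _ (by omega)
  · intro i hi
    by_cases h1 : i < 5
    · simp only [show i < 6 by omega, show i + 1 < 6 by omega, if_true]
      exact hww i h1
    · by_cases h5 : i = 5
      · subst h5
        norm_num
        rw [hw5]
        exact haC _ (by omega) _ (hr1 _ (by omega))
      · by_cases h3 : i % 2 = 0
        · simp only [show ¬ i < 6 by omega, show ¬ i + 1 < 6 by omega,
            show ¬ (i + 1) % 2 = 0 by omega, h3, if_true, if_false]
          exact (haC _ (by omega) _ (hr1 _ (by omega))).symm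
        · simp only [show ¬ i < 6 by omega, show ¬ i + 1 < 6 by omega,
            show (i + 1) % 2 = 0 by omega, h3, if_true, if_false]
          exact haC _ (by omega) _ (hr1 _ (by omega))
  · simp only [show 0 < 6 by omega, if_true]
    by_cases h1 : 2 * k - 1 < 6
    · have : 2 * k - 1 = 5 := by omega
      rw [this]
      norm_num
      rw [hw5]
      exact haw _ (by omega)
    · simp only [h1, show ¬ (2 * k - 1) % 2 = 0 by omega, if_false]
      exact haw _ (by omega)

/-- Two edges in the common neighbourhood of a vertex and its `k-1` neighbours: disjoint case. -/
lemma copy_of_two_disj {n k : ℕ} (hk : 3 ≤ k) (G : SimpleGraph (Fin n)) (v : Fin n)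
    (T C : Finset (Fin n)) (hT : T.card = k - 1) (hvT : ∀ t ∈ T, G.Adj v t)
    (hC : k + 6 ≤ C.card) (hvC : ∀ c ∈ C, G.Adj v c) (hTC : ∀ t ∈ T, ∀ c ∈ C, G.Adj t c)
    (p q r s : Fin n) (hp : p ∈ C) (hq : q ∈ C) (hr : r ∈ C) (hs : s ∈ C)
    (hpq : G.Adj p q) (hrs : G.Adj r s) (h1 : p ≠ r) (h2 : p ≠ s) (h3 : q ≠ r) (h4 : q ≠ s) :
    ContainsCopy (wheelGraph (2 * k + 1)) G := by
  have : Nonempty (Fin n) := ⟨v⟩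
  obtain ⟨a, haT, hai⟩ := enum T (k - 1) hT.ge
  have ha0 := haT 0 (by omega)
  have ha1 := haT 1 (by omega)
  have h01 : a 0 ≠ a 1 := fun h => absurd (hai 0 1 (by omega) (by omega) h) (by omega)
  have hCT : ∀ c ∈ C, ∀ t ∈ T, c ≠ t := fun c hc t ht => (hTC t ht c hc).ne'
  have hpq' := hpq.ne
  have hrs' := hrs.ne
  let w : ℕ → Fin n := fun i => match i with
    | 0 => p | 1 => q | 2 => a 0 | 3 => r | 4 => s | _ => a 1
  refine copy_of_six hk G v w a C ?_ hai ?_ rfl ?_ (fun i hi => hvT _ (haT i hi)) ?_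
    (fun i hi => hTC _ (haT i hi) _ hp) hC hvC (fun i hi c hc => hTC _ (haT i hi) c hc)
  · intro i j hi hj hij
    have := hCT p hp _ ha0
    have := hCT p hp _ ha1
    have := hCT q hq _ ha0
    have := hCT q hq _ ha1
    have := hCT r hr _ ha0
    have := hCT r hr _ ha1
    have := hCT s hs _ ha0
    have := hCT s hs _ ha1
    interval_cases i <;> interval_cases j <;> simp only [w] at hij <;>
      first | rfl | (exfalso; tauto)
  · intro i j hi hj2 hj
    have haj := haT j hj
    interval_cases i <;> simp only [w]
    · exact hCT p hp _ haj
    · exact hCT q hq _ haj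
    · intro h
      have := hai 0 j (by omega) hj h
      omega
    · exact hCT r hr _ haj
    · exact hCT s hs _ haj
    · intro h
      have := hai 1 j (by omega) hj h
      omega
  · intro i hi
    interval_cases i <;> simp only [w]
    exacts [hvC _ hp, hvC _ hq, hvT _ ha0, hvC _ hr, hvC _ hs, hvT _ ha1]
  · intro i hi
    interval_cases i <;> simp only [w]
    exacts [hpq, (hTC _ ha0 _ hq).symm, hTC _ ha0 _ hr, hrs, (hTC _ ha1 _ hs).symm]

/-- Two edges in the common neighbourhood of a vertex and its `k-1` neighbours: path case. -/
lemma copy_of_two_path {n k : ℕ} (hk : 3 ≤ k) (G : SimpleGraph (Fin n)) (v : Fin n)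
    (T C : Finset (Fin n)) (hT : T.card = k - 1) (hvT : ∀ t ∈ T, G.Adj v t)
    (hC : k + 6 ≤ C.card) (hvC : ∀ c ∈ C, G.Adj v c) (hTC : ∀ t ∈ T, ∀ c ∈ C, G.Adj t c)
    (p q r : Fin n) (hp : p ∈ C) (hq : q ∈ C) (hr : r ∈ C)
    (hpq : G.Adj p q) (hqr : G.Adj q r) (h1 : p ≠ r) :
    ContainsCopy (wheelGraph (2 * k + 1)) G := by
  have : Nonempty (Fin n) := ⟨v⟩
  obtain ⟨a, haT, hai⟩ := enum T (k - 1) hT.ge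
  have ha0 := haT 0 (by omega)
  have ha1 := haT 1 (by omega)
  have h01 : a 0 ≠ a 1 := fun h => absurd (hai 0 1 (by omega) (by omega) h) (by omega)
  have hCT : ∀ c ∈ C, ∀ t ∈ T, c ≠ t := fun c hc t ht => (hTC t ht c hc).ne'
  have hpq' := hpq.ne
  have hqr' := hqr.ne
  obtain ⟨s, hs'⟩ : (C \ {p, q, r}).Nonempty := by
    rw [← Finset.card_pos]
    have h1 := Finset.le_card_sdiff {p, q, r} C
    have h2 : ({p, q, r} : Finset (Fin n)).card ≤ 3 := Finset.card_le_three
    omega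
  obtain ⟨hs, hs2⟩ := Finset.mem_sdiff.1 hs'
  simp only [Finset.mem_insert, Finset.mem_singleton, not_or] at hs2
  obtain ⟨hsp, hsq, hsr⟩ := hs2
  let w : ℕ → Fin n := fun i => match i with
    | 0 => p | 1 => q | 2 => r | 3 => a 0 | 4 => s | _ => a 1
  refine copy_of_six hk G v w a C ?_ hai ?_ rfl ?_ (fun i hi => hvT _ (haT i hi)) ?_
    (fun i hi => hTC _ (haT i hi) _ hp) hC hvC (fun i hi c hc => hTC _ (haT i hi) c hc)
  · intro i j hi hj hij
    have := hCT p hp _ ha0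
    have := hCT p hp _ ha1
    have := hCT q hq _ ha0
    have := hCT q hq _ ha1
    have := hCT r hr _ ha0
    have := hCT r hr _ ha1
    have := hCT s hs _ ha0
    have := hCT s hs _ ha1
    interval_cases i <;> interval_cases j <;> simp only [w] at hij <;>
      first | rfl | (exfalso; tauto)
  · intro i j hi hj2 hj
    have haj := haT j hj
    interval_cases i <;> simp only [w]
    · exact hCT p hp _ haj
    · exact hCT q hq _ haj
    · exact hCT r hr _ haj
    · intro h
      have := hai 0 j (by omega) hj h
      omega
    · exact hCT s hs _ haj
    · intro h
      have := hai 1 j (by omega) hj h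
      omega
  · intro i hi
    interval_cases i <;> simp only [w]
    exacts [hvC _ hp, hvC _ hq, hvC _ hr, hvT _ ha0, hvC _ hs, hvT _ ha1]
  · intro i hi
    interval_cases i <;> simp only [w]
    exacts [hpq, hqr, (hTC _ ha0 _ hr).symm, hTC _ ha0 _ hs, (hTC _ ha1 _ hs).symm]


/-- Qualitative Kővári–Sós–Turán bound. -/
lemma kst (k : ℕ) (hk : 1 ≤ k) (ε : ℝ) (hε : 0 < ε) : ∃ N : ℕ, ∀ n : ℕ, N ≤ n →
    ∀ (G : SimpleGraph (Fin n)) (S : Finset (Fin n)),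
    (∀ A B : Finset (Fin n), A ⊆ S → B ⊆ S → k ≤ A.card → k ≤ B.card →
      (∀ a ∈ A, ∀ b ∈ B, G.Adj a b) → False) →
    ∑ y ∈ S, ((S.filter (G.Adj y)).card : ℝ) ≤ ε * (n : ℝ) ^ 2 := by
  obtain ⟨N1, hN1⟩ := exists_nat_gt (4 * k / ε)
  obtain ⟨N2, hN2⟩ := exists_nat_gt (2 * k / (ε * (ε / 4) ^ k))
  refine ⟨max 1 (max N1 N2), ?_⟩
  intro n hn G S hS
  by_contra hcon
  push Not at hcon
  have hn1 : 1 ≤ n := le_trans (le_max_left _ _) hn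
  have hn2 : (N1 : ℝ) ≤ n := by
    exact_mod_cast le_trans (le_trans (le_max_left _ _) (le_max_right _ _)) hn
  have hn3 : (N2 : ℝ) ≤ n := by
    exact_mod_cast le_trans (le_trans (le_max_right _ _) (le_max_right _ _)) hn
  have hnpos : (0 : ℝ) < n := by exact_mod_cast hn1
  set cd : Fin n → ℕ := fun y => (S.filter (G.Adj y)).card with hcd
  set Big := S.filter (fun y => ε * n / 2 ≤ (cd y : ℝ)) with hBig
  have hScard : (S.card : ℝ) ≤ n := by
    have := Finset.card_le_univ S
    rw [Fintype.card_fin] at this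
    exact_mod_cast this
  have hcdn : ∀ y, (cd y : ℝ) ≤ n := by
    intro y
    have := Finset.card_le_univ (S.filter (G.Adj y))
    rw [Fintype.card_fin] at this
    exact_mod_cast this
  -- many vertices of large degree
  have hBigcard : ε * n / 2 ≤ (Big.card : ℝ) := by
    have h1 : ∑ y ∈ S, (cd y : ℝ) ≤ ∑ y ∈ S, ((if ε * n / 2 ≤ (cd y : ℝ) then (n : ℝ) else 0)
        + ε * n / 2) := by
      apply Finset.sum_le_sum
      intro y _
      split_ifs with h
      · have := hcdn y
        have : 0 < ε * n := by positivity
        linarith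
      · push Not at h
        linarith
    rw [Finset.sum_add_distrib, ← Finset.sum_filter, Finset.sum_const, Finset.sum_const] at h1
    simp only [nsmul_eq_mul] at h1
    have h2 : (S.card : ℝ) * (ε * n / 2) ≤ n * (ε * n / 2) :=
      mul_le_mul_of_nonneg_right hScard (by positivity)
    have h3 : ε * n / 2 * n ≤ (Big.card : ℝ) * n := by
      have : ε * (n : ℝ) ^ 2 < Big.card * n + n * (ε * n / 2) := by
        calc _ < _ := hcon
          _ ≤ _ := h1
          _ ≤ _ := by linarith
      nlinarith
    exact le_of_mul_le_mul_right h3 hnpos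
  -- double counting
  have hdc : ∑ y ∈ Big, (cd y).choose k ≤ n.choose k * k := by
    calc ∑ y ∈ Big, (cd y).choose k
        = ∑ y ∈ Big, ((S.powersetCard k).filter (fun A => ∀ a ∈ A, G.Adj y a)).card := by
          apply Finset.sum_congr rfl
          intro y _
          rw [← Finset.card_powersetCard]
          congr 1
          ext A
          simp only [Finset.mem_powersetCard, Finset.mem_filter, Finset.subset_iff]
          constructor
          · rintro ⟨h1, h2⟩
            exact ⟨⟨fun a ha => (h1 ha).1, h2⟩, fun a ha => (h1 ha).2⟩
          · rintro ⟨⟨h1, h2⟩, h3⟩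
            exact ⟨fun a ha => ⟨h1 ha, h3 a ha⟩, h2⟩
      _ = ∑ A ∈ S.powersetCard k, (Big.filter (fun y => ∀ a ∈ A, G.Adj y a)).card := by
          exact Finset.sum_card_bipartiteAbove_eq_sum_card_bipartiteBelow
            (fun y A => ∀ a ∈ A, G.Adj y a)
      _ ≤ ∑ A ∈ S.powersetCard k, k := by
          apply Finset.sum_le_sum
          intro A hA
          rw [Finset.mem_powersetCard] at hA
          by_contra hlt
          push Not at hlt
          refine hS A (Big.filter (fun y => ∀ a ∈ A, G.Adj y a)) hA.1 ?_ hA.2.ge hlt.le ?_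
          · exact (Finset.filter_subset _ _).trans (Finset.filter_subset _ _)
          · intro a ha b hb
            exact ((Finset.mem_filter.1 hb).2 a ha).symm
      _ ≤ _ := by
          rw [Finset.sum_const, Finset.card_powersetCard, smul_eq_mul]
          apply Nat.mul_le_mul_right
          apply Nat.choose_le_choose
          have := Finset.card_le_univ S
          rwa [Fintype.card_fin] at this
  have hkk : (0 : ℝ) < (k.factorial : ℝ) := by exact_mod_cast Nat.factorial_pos k
  have hlow : ∀ y ∈ Big, (ε / 4 * n) ^ k / k.factorial ≤ ((cd y).choose k : ℝ) := by
    intro y hy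
    have hy' := (Finset.mem_filter.1 hy).2
    refine le_trans ?_ (Nat.pow_le_choose k (cd y))
    apply div_le_div_of_nonneg_right _ hkk.le
    have h4k : 4 * k / ε < n := lt_of_lt_of_le hN1 hn2
    rw [div_lt_iff₀ hε] at h4k
    apply pow_le_pow_left₀ (by positivity)
    have hck : k ≤ cd y + 1 := by
      have : (k : ℝ) ≤ cd y + 1 := by nlinarith
      exact_mod_cast this
    rw [Nat.cast_sub hck]
    push_cast
    nlinarith
  have h1 : ε * n / 2 * ((ε / 4 * n) ^ k / k.factorial) ≤ (n : ℝ) ^ k / k.factorial * k := by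
    calc ε * n / 2 * ((ε / 4 * n) ^ k / k.factorial)
        ≤ Big.card * ((ε / 4 * n) ^ k / k.factorial) :=
          mul_le_mul_of_nonneg_right hBigcard (by positivity)
      _ = ∑ y ∈ Big, (ε / 4 * n) ^ k / k.factorial := by
          rw [Finset.sum_const, nsmul_eq_mul]
      _ ≤ ∑ y ∈ Big, ((cd y).choose k : ℝ) := Finset.sum_le_sum hlow
      _ ≤ (n.choose k * k : ℕ) := by exact_mod_cast hdc
      _ = (n.choose k : ℝ) * k := by push_cast; ring
      _ ≤ _ := by
          apply mul_le_mul_of_nonneg_right _ (by positivity)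
          exact Nat.choose_le_pow_div k n
  have h2 : ε * n / 2 * (ε / 4) ^ k ≤ k := by
    have hP : (0 : ℝ) < (n : ℝ) ^ k / k.factorial := by positivity
    have : (ε * n / 2 * (ε / 4) ^ k) * ((n : ℝ) ^ k / k.factorial)
        ≤ k * ((n : ℝ) ^ k / k.factorial) := by
      calc _ = ε * n / 2 * ((ε / 4 * n) ^ k / k.factorial) := by
            rw [mul_pow]; ring
        _ ≤ _ := h1
        _ = _ := by ring
    exact le_of_mul_le_mul_right this hP
  have h3 : 2 * k / (ε * (ε / 4) ^ k) < n := lt_of_lt_of_le hN2 hn3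
  rw [div_lt_iff₀ (by positivity)] at h3
  nlinarith

/-- The neighbourhood of a vertex. -/
noncomputable def nb {n : ℕ} (G : SimpleGraph (Fin n)) (v : Fin n) : Finset (Fin n) :=
  Finset.univ.filter (G.Adj v)

lemma mem_nb {n : ℕ} (G : SimpleGraph (Fin n)) (v w : Fin n) : w ∈ nb G v ↔ G.Adj v w := by
  simp [nb]

lemma codeg (k : ℕ) (hk : 2 ≤ k) (ε : ℝ) (hε : 0 < ε) : ∃ N : ℕ, ∀ n : ℕ, N ≤ n →
    ∀ (G : SimpleGraph (Fin n)), WheelFree (2 * k + 1) G → ∀ v,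
    ∑ y ∈ nb G v, (((nb G v).filter (G.Adj y)).card : ℝ) ≤ ε * (n : ℝ) ^ 2 := by
  obtain ⟨N, hN⟩ := kst k (by omega) ε hε
  refine ⟨N, fun n hn G hG v => hN n hn G _ ?_⟩
  intro A B hA hB hAc hBc hAB
  exact hG (copy_of_bip hk G v A B hAc hBc (fun a ha => (mem_nb G v a).1 (hA ha))
    (fun a ha => (mem_nb G v a).1 (hB ha)) hAB)


/-- The quadratic form of the adjacency matrix. -/
noncomputable def quad {n : ℕ} (G : SimpleGraph (Fin n)) (y : Fin n → ℝ) : ℝ :=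
  ∑ i, y i * ∑ j ∈ nb G i, y j

lemma mulVec_eq {n : ℕ} (G : SimpleGraph (Fin n)) (y : Fin n → ℝ) (v : Fin n) :
    (G.adjMatrix ℝ).mulVec y v = ∑ j ∈ nb G v, y j := by
  simp [Matrix.mulVec, dotProduct, SimpleGraph.adjMatrix_apply, nb, Finset.sum_filter]

lemma quad_eq {n : ℕ} (G : SimpleGraph (Fin n)) (y : Fin n → ℝ) :
    quad G y = ∑ i, ∑ j, if G.Adj i j then y i * y j else 0 := by
  simp only [quad, nb, Finset.sum_filter, Finset.mul_sum, mul_ite, mul_zero]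

lemma quad_abs {n : ℕ} (G : SimpleGraph (Fin n)) (y : Fin n → ℝ) :
    quad G y ≤ quad G (fun i => |y i|) := by
  rw [quad_eq, quad_eq]
  refine Finset.sum_le_sum fun i _ => Finset.sum_le_sum fun j _ => ?_
  split_ifs
  · rw [← abs_mul]
    exact le_abs_self _
  · exact le_rfl

lemma quad_smul {n : ℕ} (G : SimpleGraph (Fin n)) (c : ℝ) (y : Fin n → ℝ) :
    quad G (fun i => c * y i) = c ^ 2 * quad G y := by
  rw [quad_eq, quad_eq, Finset.mul_sum]
  refine Finset.sum_congr rfl fun i _ => ?_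
  rw [Finset.mul_sum]
  refine Finset.sum_congr rfl fun j _ => ?_
  split_ifs
  · ring
  · ring

/-- Isolate the contribution of one vertex. -/
lemma quad_split {n : ℕ} (G : SimpleGraph (Fin n)) (y : Fin n → ℝ) (v : Fin n) :
    quad G y = 2 * y v * ∑ j ∈ nb G v, y j +
      ∑ i ∈ Finset.univ.erase v, ∑ j ∈ Finset.univ.erase v,
        if G.Adj i j then y i * y j else 0 := by
  rw [quad_eq, ← Finset.add_sum_erase _ _ (Finset.mem_univ v)]
  have h1 : ∀ i, (∑ j, if G.Adj i j then y i * y j else 0) =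
      (if G.Adj i v then y i * y v else 0) +
        ∑ j ∈ Finset.univ.erase v, if G.Adj i j then y i * y j else 0 := fun i =>
    (Finset.add_sum_erase _ _ (Finset.mem_univ v)).symm
  have h2 : (∑ j, if G.Adj v j then y v * y j else 0) = y v * ∑ j ∈ nb G v, y j := by
    simp only [nb, Finset.sum_filter, Finset.mul_sum, mul_ite, mul_zero]
  have h3 : (∑ i ∈ Finset.univ.erase v, if G.Adj i v then y i * y v else 0) =
      y v * ∑ j ∈ nb G v, y j := by
    rw [← h2, ← Finset.add_sum_erase _ _ (Finset.mem_univ v)]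
    simp only [SimpleGraph.irrefl, if_false, zero_add]
    refine Finset.sum_congr rfl fun i _ => ?_
    simp only [G.adj_comm i v, mul_comm]
  rw [h2, Finset.sum_congr rfl (fun i _ => h1 i), Finset.sum_add_distrib, h3]
  ring

lemma spectral {n : ℕ} (hn : 1 ≤ n) (G : SimpleGraph (Fin n)) :
    ∃ x : Fin n → ℝ, (∀ v, 0 ≤ x v) ∧ (∀ v, x v ≤ 1) ∧ (∃ u, x u = 1) ∧
      (∀ v, ∑ w ∈ nb G v, x w = lam1 G * x v) ∧
      ∀ y : Fin n → ℝ, quad G y ≤ lam1 G * ∑ i, y i ^ 2 := by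
  let v0 : Fin n := ⟨0, by omega⟩
  have : Nonempty (Fin n) := ⟨v0⟩
  let S : Set (Fin n → ℝ) := {y | ∑ i, y i ^ 2 = 1}
  have hScomp : IsCompact S := by
    apply Metric.isCompact_of_isClosed_isBounded
    · exact isClosed_eq (by fun_prop) (by fun_prop)
    · refine (Metric.isBounded_closedBall (x := (0 : Fin n → ℝ)) (r := 1)).subset ?_
      intro y hy
      rw [mem_closedBall_zero_iff, pi_norm_le_iff_of_nonneg zero_le_one]
      intro i
      rw [Real.norm_eq_abs, ← sq_le_one_iff_abs_le_one]
      have hy' : ∑ i, y i ^ 2 = 1 := hy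
      rw [← hy']
      exact Finset.single_le_sum (f := fun i => y i ^ 2) (fun j _ => sq_nonneg _)
        (Finset.mem_univ i)
  have hSne : S.Nonempty := by
    refine ⟨Pi.single v0 1, ?_⟩
    show ∑ i, (Pi.single v0 1 : Fin n → ℝ) i ^ 2 = 1
    rw [Finset.sum_eq_single v0]
    · simp
    · intro b _ hb
      simp [hb]
    · simp
  have hcont : Continuous (quad G) := by
    unfold quad
    fun_prop
  obtain ⟨y0, hy0, hmax⟩ := hScomp.exists_isMaxOn hSne hcont.continuousOn
  set M := quad G y0 with hM
  have hbound : ∀ y : Fin n → ℝ, quad G y ≤ M * ∑ i, y i ^ 2 := by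
    intro y
    by_cases h0 : ∑ i, y i ^ 2 = 0
    · have : ∀ i, y i = 0 := by
        intro i
        rw [Finset.sum_eq_zero_iff_of_nonneg (fun i _ => sq_nonneg _)] at h0
        have := h0 i (Finset.mem_univ i)
        exact pow_eq_zero_iff (two_ne_zero) |>.1 this
      rw [h0, mul_zero]
      unfold quad
      simp [this]
    · have hpos : 0 < ∑ i, y i ^ 2 :=
        lt_of_le_of_ne (Finset.sum_nonneg fun i _ => sq_nonneg _) (Ne.symm h0)
      set s := ∑ i, y i ^ 2 with hs
      have hin : (fun i => (Real.sqrt s)⁻¹ * y i) ∈ S := by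
        show ∑ i, ((Real.sqrt s)⁻¹ * y i) ^ 2 = 1
        simp only [mul_pow]
        rw [← Finset.mul_sum, ← hs, inv_pow, Real.sq_sqrt hpos.le, inv_mul_cancel₀ h0]
      have h1 : quad G (fun i => (Real.sqrt s)⁻¹ * y i) ≤ M := hmax hin
      rw [quad_smul, inv_pow, Real.sq_sqrt hpos.le] at h1
      rw [inv_mul_le_iff₀ hpos] at h1
      linarith
  -- the absolute value is also a maximizer
  set z : Fin n → ℝ := fun i => |y0 i| with hz
  have hznn : ∀ v, 0 ≤ z v := fun v => abs_nonneg _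
  have hzS : ∑ i, z i ^ 2 = 1 := by
    simp only [hz, sq_abs]
    exact hy0
  have hzM : quad G z = M := by
    apply le_antisymm
    · have := hbound z
      rwa [hzS, mul_one] at this
    · exact quad_abs G y0
  have hMnn : 0 ≤ M := by
    rw [← hzM]
    exact Finset.sum_nonneg fun i _ => mul_nonneg (hznn i)
      (Finset.sum_nonneg fun j _ => hznn j)
  have heig : ∀ v, ∑ w ∈ nb G v, z w = M * z v := by
    intro v
    set σ := ∑ w ∈ nb G v, z w with hσ
    have key : ∀ t : ℝ, 2 * t * (σ - M * z v) ≤ M * t ^ 2 := by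
      intro t
      have h1 := hbound (Function.update z v (z v + t))
      rw [quad_split G _ v] at h1
      have h2 := quad_split G z v
      rw [hzM] at h2
      have h3 : ∑ j ∈ nb G v, Function.update z v (z v + t) j = σ := by
        apply Finset.sum_congr rfl
        intro j hj
        rw [Function.update_of_ne]
        exact ((mem_nb G v j).1 hj).ne'
      have h4 : (∑ i ∈ Finset.univ.erase v, ∑ j ∈ Finset.univ.erase v,
          if G.Adj i j then Function.update z v (z v + t) i * Function.update z v (z v + t) j
            else 0) = ∑ i ∈ Finset.univ.erase v, ∑ j ∈ Finset.univ.erase v,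
          if G.Adj i j then z i * z j else 0 := by
        refine Finset.sum_congr rfl fun i hi => Finset.sum_congr rfl fun j hj => ?_
        rw [Function.update_of_ne (Finset.ne_of_mem_erase hi),
          Function.update_of_ne (Finset.ne_of_mem_erase hj)]
      have h5 : ∑ i, Function.update z v (z v + t) i ^ 2 = 1 - z v ^ 2 + (z v + t) ^ 2 := by
        rw [← hzS, ← Finset.add_sum_erase _ _ (Finset.mem_univ v),
          ← Finset.add_sum_erase _ (fun i => z i ^ 2) (Finset.mem_univ v)]
        rw [Function.update_self]
        have : ∑ i ∈ Finset.univ.erase v, Function.update z v (z v + t) i ^ 2 =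
            ∑ i ∈ Finset.univ.erase v, z i ^ 2 := by
          refine Finset.sum_congr rfl fun i hi => ?_
          rw [Function.update_of_ne (Finset.ne_of_mem_erase hi)]
        rw [this]
        ring
      rw [h3, h4, h5, Function.update_self] at h1
      nlinarith
    have hd : σ - M * z v = 0 := by
      set d := σ - M * z v with hd
      have h := key (d / (M + 1))
      have hM1 : 0 < M + 1 := by linarith
      have h' : 2 * d ^ 2 / (M + 1) ≤ M * d ^ 2 / (M + 1) ^ 2 := by
        calc 2 * d ^ 2 / (M + 1) = 2 * (d / (M + 1)) * d := by ring
          _ ≤ _ := h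
          _ = _ := by rw [div_pow, mul_div_assoc]
      rw [div_le_div_iff₀ hM1 (by positivity)] at h'
      have h'' : d ^ 2 * ((M + 1) * (M + 2)) ≤ 0 := by nlinarith
      have h3 : 0 < (M + 1) * (M + 2) := by positivity
      have h4 : d ^ 2 ≤ 0 := by
        by_contra hc
        push Not at hc
        have := mul_pos hc h3
        linarith
      exact pow_eq_zero_iff two_ne_zero |>.1 (le_antisymm h4 (sq_nonneg _))
    linarith
  have hzne : z ≠ 0 := by
    intro h
    rw [h] at hzS
    simp at hzS
  have hlam : lam1 G = M := by
    unfold lam1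
    apply IsGreatest.csSup_eq
    constructor
    · apply Module.End.hasEigenvalue_of_hasEigenvector (x := z)
      rw [Module.End.hasEigenvector_iff, Module.End.mem_eigenspace_iff]
      refine ⟨?_, hzne⟩
      ext v
      rw [Matrix.toLin'_apply, mulVec_eq, heig v]
      simp
    · intro μ hμ
      obtain ⟨y, hy⟩ := Module.End.HasEigenvalue.exists_hasEigenvector hμ
      rw [Module.End.hasEigenvector_iff, Module.End.mem_eigenspace_iff] at hy
      obtain ⟨hy, hyne⟩ := hy
      have h1 : ∀ v, ∑ w ∈ nb G v, y w = μ * y v := by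
        intro v
        have := congrFun hy v
        rw [Matrix.toLin'_apply, mulVec_eq] at this
        simpa using this
      have h2 : quad G y = μ * ∑ i, y i ^ 2 := by
        unfold quad
        rw [Finset.mul_sum]
        refine Finset.sum_congr rfl fun i _ => ?_
        rw [h1 i]
        ring
      have h3 : 0 < ∑ i, y i ^ 2 := by
        apply lt_of_le_of_ne (Finset.sum_nonneg fun i _ => sq_nonneg _)
        intro h
        apply hyne
        ext i
        rw [eq_comm, Finset.sum_eq_zero_iff_of_nonneg (fun i _ => sq_nonneg _)] at h
        exact pow_eq_zero_iff two_ne_zero |>.1 (h i (Finset.mem_univ i))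
      have h4 := hbound y
      rw [h2] at h4
      exact le_of_mul_le_mul_right h4 h3
  obtain ⟨u, _, hu⟩ := Finset.exists_max_image Finset.univ z Finset.univ_nonempty
  have hupos : 0 < z u := by
    apply lt_of_le_of_ne (hznn u)
    intro h
    apply hzne
    ext i
    exact le_antisymm ((hu i (Finset.mem_univ i)).trans_eq h.symm) (hznn i)
  refine ⟨fun i => z i / z u, fun v => div_nonneg (hznn v) hupos.le, fun v => ?_, ⟨u, ?_⟩, ?_, ?_⟩
  · rw [div_le_one hupos]
    exact hu v (Finset.mem_univ v)
  · exact div_self hupos.ne'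
  · intro v
    rw [← Finset.sum_div, heig v, hlam, mul_div_assoc]
  · rw [hlam]
    exact hbound


lemma cycle_of_copy {n k : ℕ} (hk : 2 ≤ k) (G : SimpleGraph (Fin n))
    (h : ContainsCopy (wheelGraph (2 * k + 1)) G) : ∃ (v : Fin n) (c : ℕ → Fin n),
    (∀ i j, i < 2 * k → j < 2 * k → c i = c j → i = j) ∧
    (∀ i, i < 2 * k → G.Adj v (c i)) ∧
    (∀ i, i + 1 < 2 * k → G.Adj (c i) (c (i + 1))) := by
  obtain ⟨f, hf⟩ := h
  refine ⟨f ⟨0, by omega⟩, fun i => if h : i < 2 * k then f ⟨i + 1, by omega⟩ else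
    f ⟨0, by omega⟩, ?_, ?_, ?_⟩
  · intro i j hi hj hij
    simp only [hi, hj, dif_pos] at hij
    have := f.injective hij
    simpa using this
  · intro i hi
    simp only [hi, dif_pos]
    apply hf
    refine ⟨?_, Or.inl rfl⟩
    intro h
    simp at h
  · intro i hi
    simp only [hi, show i < 2 * k by omega, dif_pos]
    apply hf
    refine ⟨?_, Or.inr (Or.inr (Or.inl rfl))⟩
    intro h
    simp at h

/-- Complete bipartite graph with parts `L`, `Lᶜ` together with cliques in `L` on the fibres
of `β`. -/
def blockGraph {n : ℕ} (L : Finset (Fin n)) (β : Fin n → ℕ) : SimpleGraph (Fin n) where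
  Adj a b := a ≠ b ∧ ((a ∈ L ∧ b ∉ L) ∨ (a ∉ L ∧ b ∈ L) ∨ (a ∈ L ∧ b ∈ L ∧ β a = β b))
  symm := by
    constructor
    intro a b h
    refine ⟨h.1.symm, ?_⟩
    rcases h.2 with h | h | h
    · exact Or.inr (Or.inl ⟨h.2, h.1⟩)
    · exact Or.inl ⟨h.2, h.1⟩
    · exact Or.inr (Or.inr ⟨h.2.1, h.1, h.2.2.symm⟩)
  loopless := by
    constructor
    intro a h
    exact h.1 rfl

lemma blockGraph_free {n k : ℕ} (hk : 2 ≤ k) (L : Finset (Fin n)) (β : Fin n → ℕ)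
    (hβ : ∀ m, (L.filter (fun a => β a = m)).card ≤ k) :
    WheelFree (2 * k + 1) (blockGraph L β) := by
  intro hcopy
  obtain ⟨v, c, hinj, hv, hc⟩ := cycle_of_copy hk _ hcopy
  by_cases hvL : v ∈ L
  · have hblock : ∀ i, i < 2 * k → c i ∈ L → β (c i) = β v := by
      intro i hi hiL
      rcases (hv i hi).2 with h | h | h
      · exact absurd hiL h.2
      · exact absurd hvL h.1
      · exact h.2.2.symm
    have hch : ∀ j, ∃ i, (j < k → (i = 2 * j ∨ i = 2 * j + 1) ∧ c i ∈ L) := by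
      intro j
      by_cases hj : j < k
      · by_cases h1 : c (2 * j) ∈ L
        · exact ⟨2 * j, fun _ => ⟨Or.inl rfl, h1⟩⟩
        · refine ⟨2 * j + 1, fun _ => ⟨Or.inr rfl, ?_⟩⟩
          rcases (hc (2 * j) (by omega)).2 with h | h | h
          · exact absurd h.1 h1
          · exact h.2
          · exact h.2.1
      · exact ⟨0, fun h => absurd h hj⟩
    choose e he using hch
    have hsub : insert v ((Finset.range k).image (fun j => c (e j))) ⊆
        L.filter (fun a => β a = β v) := by
      intro a ha
      rw [Finset.mem_insert, Finset.mem_image] at ha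
      rw [Finset.mem_filter]
      rcases ha with rfl | ⟨j, hj, rfl⟩
      · exact ⟨hvL, rfl⟩
      · have hj' := Finset.mem_range.1 hj
        have h1 := he j hj'
        exact ⟨h1.2, hblock _ (by omega) h1.2⟩
    have hcard : (insert v ((Finset.range k).image (fun j => c (e j)))).card = k + 1 := by
      rw [Finset.card_insert_of_notMem, Finset.card_image_of_injOn, Finset.card_range]
      · intro i hi j hj hij
        have hi' := Finset.mem_range.1 (Finset.mem_coe.1 hi)
        have hj' := Finset.mem_range.1 (Finset.mem_coe.1 hj)
        have h1 := (he i hi').1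
        have h2 := (he j hj').1
        have := hinj _ _ (by omega) (by omega) hij
        omega
      · intro h
        obtain ⟨j, hj, hjv⟩ := Finset.mem_image.1 h
        have hj' := Finset.mem_range.1 hj
        have h1 := (he j hj').1
        exact (hv (e j) (by omega)).ne hjv.symm
    have := (Finset.card_le_card hsub).trans (hβ _)
    omega
  · have hL : ∀ i, i < 2 * k → c i ∈ L := by
      intro i hi
      rcases (hv i hi).2 with h | h | h
      · exact absurd h.1 hvL
      · exact h.2
      · exact absurd h.1 hvL
    have hb : ∀ i, i < 2 * k → β (c i) = β (c 0) := by
      intro i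
      induction i with
      | zero => intro _; rfl
      | succ i ih =>
        intro hi
        rw [← ih (by omega)]
        rcases (hc i hi).2 with h | h | h
        · exact absurd (hL _ hi) h.2
        · exact absurd (hL i (by omega)) h.1
        · exact h.2.2.symm
    have hsub : (Finset.range (2 * k)).image c ⊆ L.filter (fun a => β a = β (c 0)) := by
      intro a ha
      obtain ⟨i, hi, rfl⟩ := Finset.mem_image.1 ha
      have hi' := Finset.mem_range.1 hi
      exact Finset.mem_filter.2 ⟨hL i hi', hb i hi'⟩
    have hcard : ((Finset.range (2 * k)).image c).card = 2 * k := by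
      rw [Finset.card_image_of_injOn, Finset.card_range]
      intro i hi j hj hij
      exact hinj _ _ (Finset.mem_range.1 (Finset.mem_coe.1 hi))
        (Finset.mem_range.1 (Finset.mem_coe.1 hj)) hij
    have := (Finset.card_le_card hsub).trans (hβ _)
    omega

/-- Replace the neighbourhood of `v` by `Q`. -/
def reattach {n : ℕ} (G : SimpleGraph (Fin n)) (v : Fin n) (Q : Finset (Fin n)) :
    SimpleGraph (Fin n) where
  Adj a b := (a ≠ v ∧ b ≠ v ∧ G.Adj a b) ∨ (a = v ∧ b ≠ v ∧ b ∈ Q) ∨ (b = v ∧ a ≠ v ∧ a ∈ Q)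
  symm := by
    constructor
    intro a b h
    rcases h with h | h | h
    · exact Or.inl ⟨h.2.1, h.1, h.2.2.symm⟩
    · exact Or.inr (Or.inr h)
    · exact Or.inr (Or.inl h)
  loopless := by
    constructor
    intro a h
    rcases h with h | h | h
    · exact G.loopless.irrefl a h.2.2
    · exact h.2.1 h.1
    · exact h.2.1 h.1

lemma reattach_free {n t : ℕ} (G : SimpleGraph (Fin n)) (v : Fin n)
    (Q : Finset (Fin n)) (hG : WheelFree t G)
    (hQ : ∀ F Z : Finset (Fin n), F ⊆ Q → F.card ≤ t → Z.card ≤ t →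
      ∃ v', v' ∉ Z ∧ ∀ q ∈ F, G.Adj v' q) :
    WheelFree t (reattach G v Q) := by
  rintro ⟨f, hf⟩
  have hcard : (Finset.univ.image f).card ≤ t := by
    refine Finset.card_image_le.trans ?_
    rw [Finset.card_univ, Fintype.card_fin]
  obtain ⟨v', hv', hv'Q⟩ := hQ ((Finset.univ.image f).filter (fun q => q ∈ Q))
    (Finset.univ.image f) (fun q hq => (Finset.mem_filter.1 hq).2)
    ((Finset.card_filter_le _ _).trans hcard) hcard
  have hv'f : ∀ a, f a ≠ v' := fun a h =>
    hv' (Finset.mem_image.2 ⟨a, Finset.mem_univ a, h⟩)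
  apply hG
  refine ⟨⟨fun a => if f a = v then v' else f a, ?_⟩, ?_⟩
  · intro a b hab
    simp only at hab
    split_ifs at hab with h1 h2 h2
    · exact f.injective (h1.trans h2.symm)
    · exact absurd hab.symm (hv'f b)
    · exact absurd hab (hv'f a)
    · exact f.injective hab
  · intro a b hab
    show G.Adj (if f a = v then v' else f a) (if f b = v then v' else f b)
    have h := hf a b hab
    rcases h with h | h | h
    · rw [if_neg h.1, if_neg h.2.1]
      exact h.2.2
    · rw [if_pos h.1, if_neg h.2.1]
      exact hv'Q _ (Finset.mem_filter.2 ⟨Finset.mem_image.2 ⟨b, Finset.mem_univ b, rfl⟩, h.2.2⟩)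
    · rw [if_pos h.1, if_neg h.2.1]
      exact (hv'Q _ (Finset.mem_filter.2
        ⟨Finset.mem_image.2 ⟨a, Finset.mem_univ a, rfl⟩, h.2.2⟩)).symm

/-- In a spectrally extremal graph, every Perron entry is at least what it would get from any
admissible reattachment. -/
lemma reattach_bound {n t : ℕ} (hn : 1 ≤ n) (G : SimpleGraph (Fin n)) (hG : IsSpexWheel t G)
    (hpos : 0 < lam1 G) (x : Fin n → ℝ) (hx0 : ∀ v, 0 ≤ x v)
    (heig : ∀ v, ∑ w ∈ nb G v, x w = lam1 G * x v)
    (v : Fin n) (Q : Finset (Fin n))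
    (hQ : ∀ F Z : Finset (Fin n), F ⊆ Q → F.card ≤ t → Z.card ≤ t →
      ∃ v', v' ∉ Z ∧ ∀ q ∈ F, G.Adj v' q) :
    ∑ w ∈ Q.erase v, x w ≤ lam1 G * x v := by
  set G' := reattach G v Q with hG'
  have hlam := hG.2 G' (reattach_free G v Q hG.1 hQ)
  obtain ⟨_, _, _, _, _, hbound⟩ := spectral hn G'
  set σ := ∑ w ∈ Q.erase v, x w with hσ
  set M := lam1 G with hM
  set τ := σ / M with hτ
  have hσ0 : 0 ≤ σ := Finset.sum_nonneg fun i _ => hx0 i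
  have h1 := hbound (Function.update x v τ)
  have hnn : 0 ≤ ∑ i, Function.update x v τ i ^ 2 := Finset.sum_nonneg fun i _ => sq_nonneg _
  have h1' := h1.trans (mul_le_mul_of_nonneg_right hlam hnn)
  rw [quad_split G' _ v] at h1'
  have h2 := quad_split G x v
  have h2' : quad G x = M * ∑ i, x i ^ 2 := by
    unfold quad
    rw [Finset.mul_sum]
    refine Finset.sum_congr rfl fun i _ => ?_
    rw [heig i]
    ring
  rw [h2', heig v] at h2
  have hnb : nb G' v = Q.erase v := by
    ext w
    rw [mem_nb, Finset.mem_erase]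
    constructor
    · rintro (h | h | h)
      · exact absurd rfl h.1
      · exact h.2
      · exact absurd rfl h.2.1
    · intro h
      exact Or.inr (Or.inl ⟨rfl, h⟩)
  have h3 : ∑ j ∈ nb G' v, Function.update x v τ j = σ := by
    rw [hnb]
    apply Finset.sum_congr rfl
    intro j hj
    rw [Function.update_of_ne]
    exact Finset.ne_of_mem_erase hj
  have h4 : (∑ i ∈ Finset.univ.erase v, ∑ j ∈ Finset.univ.erase v,
      if G'.Adj i j then Function.update x v τ i * Function.update x v τ j
        else 0) = ∑ i ∈ Finset.univ.erase v, ∑ j ∈ Finset.univ.erase v,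
      if G.Adj i j then x i * x j else 0 := by
    refine Finset.sum_congr rfl fun i hi => Finset.sum_congr rfl fun j hj => ?_
    have hi' := Finset.ne_of_mem_erase hi
    have hj' := Finset.ne_of_mem_erase hj
    rw [Function.update_of_ne hi', Function.update_of_ne hj']
    have : G'.Adj i j ↔ G.Adj i j := by
      constructor
      · rintro (h | h | h)
        · exact h.2.2
        · exact absurd h.1 hi'
        · exact absurd h.1 hj'
      · intro h
        exact Or.inl ⟨hi', hj', h⟩
    simp only [this]
  have h5 : ∑ i, Function.update x v τ i ^ 2 = ∑ i, x i ^ 2 - x v ^ 2 + τ ^ 2 := by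
    rw [← Finset.add_sum_erase _ _ (Finset.mem_univ v),
      ← Finset.add_sum_erase _ (fun i => x i ^ 2) (Finset.mem_univ v)]
    rw [Function.update_self]
    have : ∑ i ∈ Finset.univ.erase v, Function.update x v τ i ^ 2 =
        ∑ i ∈ Finset.univ.erase v, x i ^ 2 := by
      refine Finset.sum_congr rfl fun i hi => ?_
      rw [Function.update_of_ne (Finset.ne_of_mem_erase hi)]
    rw [this]
    ring
  rw [h3, h4, h5, Function.update_self] at h1'
  have hστ : σ = M * τ := by
    rw [hτ]
    field_simp
  have h6 : M * τ ^ 2 ≤ M * x v ^ 2 := by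
    rw [hστ] at h1'
    nlinarith
  have h7 : τ ^ 2 ≤ x v ^ 2 := le_of_mul_le_mul_left h6 hpos
  have h8 : τ ≤ x v := (le_abs_self _).trans (abs_le_of_sq_le_sq h7 (hx0 v))
  rw [hστ]
  exact mul_le_mul_of_nonneg_left h8 hpos.le


lemma lam_lower {n k : ℕ} (hk : 2 ≤ k) (hn : 1 ≤ n) (G : SimpleGraph (Fin n))
    (hG : IsSpexWheel (2 * k + 1) G) : ((n : ℝ) - 1) / 2 ≤ lam1 G := by
  set L : Finset (Fin n) := Finset.univ.filter (fun i => i.val < n / 2) with hL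
  set H := blockGraph L (fun i => i.val) with hH
  have hfree : WheelFree (2 * k + 1) H := by
    apply blockGraph_free hk
    intro m
    refine le_trans (Finset.card_le_one.2 ?_) (show 1 ≤ k by omega)
    intro a ha b hb
    exact Fin.ext ((Finset.mem_filter.1 ha).2.trans (Finset.mem_filter.1 hb).2.symm)
  have hlam := hG.2 H hfree
  obtain ⟨_, _, _, _, _, hbound⟩ := spectral hn H
  have h1 := hbound (fun _ => 1)
  have hLc : L.card = n / 2 := by
    rw [hL, Fin.card_filter_val_lt]
    omega
  have hRc : Lᶜ.card = n - n / 2 := by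
    rw [Finset.card_compl, Fintype.card_fin, hLc]
  have h2 : quad H (fun _ => 1) = ∑ i, ((nb H i).card : ℝ) := by
    unfold quad
    simp
  have h3 : ∑ i, (nb H i).card = ∑ i ∈ L, (nb H i).card + ∑ i ∈ Lᶜ, (nb H i).card :=
    (Finset.sum_add_sum_compl L _).symm
  have h4 : L.card * Lᶜ.card ≤ ∑ i ∈ L, (nb H i).card := by
    rw [← smul_eq_mul, ← Finset.sum_const]
    apply Finset.sum_le_sum
    intro i hi
    apply Finset.card_le_card
    intro j hj
    rw [mem_nb]
    have hj' := Finset.mem_compl.1 hj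
    exact ⟨fun h => hj' (h ▸ hi), Or.inl ⟨hi, hj'⟩⟩
  have h5 : Lᶜ.card * L.card ≤ ∑ i ∈ Lᶜ, (nb H i).card := by
    rw [← smul_eq_mul, ← Finset.sum_const]
    apply Finset.sum_le_sum
    intro i hi
    apply Finset.card_le_card
    intro j hj
    rw [mem_nb]
    have hi' := Finset.mem_compl.1 hi
    exact ⟨fun h => hi' (h ▸ hj), Or.inr (Or.inl ⟨hi', hj⟩)⟩
  have h6 : n ^ 2 ≤ 2 * ∑ i, (nb H i).card + n := by
    rw [h3]
    rw [hLc, hRc] at h4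
    rw [hLc, hRc] at h5
    have h7 : n ^ 2 ≤ 4 * ((n / 2) * (n - n / 2)) + n := by
      rcases Nat.even_or_odd' n with ⟨m, hm | hm⟩
      · have e1 : n / 2 = m := by omega
        have e2 : n - n / 2 = m := by omega
        rw [e2, e1, hm]
        nlinarith
      · have e1 : n / 2 = m := by omega
        have e2 : n - n / 2 = m + 1 := by omega
        rw [e2, e1, hm]
        nlinarith
    nlinarith
  rw [h2] at h1
  simp only [one_pow, Finset.sum_const, Finset.card_univ, Fintype.card_fin, nsmul_eq_mul,
    mul_one] at h1
  have h6' : (n : ℝ) ^ 2 ≤ 2 * ∑ i, ((nb H i).card : ℝ) + n := by exact_mod_cast h6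
  have hnp : (0 : ℝ) < n := by exact_mod_cast hn
  have h8 : ((n : ℝ) - 1) / 2 * n ≤ lam1 H * n := by nlinarith
  exact (le_of_mul_le_mul_right h8 hnp).trans hlam

lemma degIn_eq {n : ℕ} (G : SimpleGraph (Fin n)) (A : Finset (Fin n)) (v : Fin n) :
    degIn G A v = (A.filter (fun u => G.Adj v u)).card := rfl

lemma cut_sum {n : ℕ} (G : SimpleGraph (Fin n)) (S : Finset (Fin n)) :
    cutCount G S = ∑ a, ∑ b, if G.Adj a b ∧ a ∈ S ∧ b ∉ S then 1 else 0 := by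
  show (Finset.card _) = _
  rw [Finset.card_filter, Fintype.sum_prod_type]

lemma cut_eq {n : ℕ} (G : SimpleGraph (Fin n)) (S : Finset (Fin n)) :
    cutCount G S = ∑ a ∈ S, degIn G Sᶜ a := by
  rw [cut_sum, ← Finset.sum_filter_add_sum_filter_not Finset.univ (fun a => a ∈ S)]
  have h0 : (∑ a ∈ Finset.univ.filter (fun a => a ∉ S), ∑ b : Fin n,
      if G.Adj a b ∧ a ∈ S ∧ b ∉ S then 1 else 0) = 0 := by
    apply Finset.sum_eq_zero
    intro a ha
    have := (Finset.mem_filter.1 ha).2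
    simp [this]
  rw [h0, add_zero, Finset.filter_univ_mem]
  apply Finset.sum_congr rfl
  intro a ha
  rw [degIn_eq, Finset.card_filter, ← Finset.sum_filter_add_sum_filter_not Finset.univ
    (fun b => b ∈ Sᶜ), Finset.filter_univ_mem]
  have h1 : (∑ b ∈ Finset.univ.filter (fun b => b ∉ Sᶜ),
      if G.Adj a b ∧ a ∈ S ∧ b ∉ S then 1 else 0) = 0 := by
    apply Finset.sum_eq_zero
    intro b hb
    have := (Finset.mem_filter.1 hb).2
    rw [Finset.mem_compl, not_not] at this
    simp [this]
  rw [h1, add_zero]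
  apply Finset.sum_congr rfl
  intro b hb
  rw [Finset.mem_compl] at hb
  simp [ha, hb]

lemma cut_compl {n : ℕ} (G : SimpleGraph (Fin n)) (S : Finset (Fin n)) :
    cutCount G Sᶜ = cutCount G S := by
  rw [cut_sum, cut_sum, Finset.sum_comm]
  refine Finset.sum_congr rfl fun a _ => Finset.sum_congr rfl fun b _ => ?_
  congr 1
  rw [G.adj_comm]
  simp only [Finset.mem_compl, not_not, eq_iff_iff]
  tauto

lemma maxcut_symm {n : ℕ} {G : SimpleGraph (Fin n)} {L R : Finset (Fin n)}
    (h : IsMaxCut G L R) : IsMaxCut G R L := by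
  obtain ⟨h1, h2⟩ := h
  refine ⟨by rw [h1, compl_compl], fun S => ?_⟩
  rw [h1, cut_compl]
  exact h2 S

lemma degIn_insert {n : ℕ} (G : SimpleGraph (Fin n)) (A : Finset (Fin n)) (v a : Fin n)
    (hv : v ∉ A) : degIn G (insert v A) a = degIn G A a + if G.Adj a v then 1 else 0 := by
  rw [degIn_eq, degIn_eq, Finset.filter_insert]
  split_ifs with h
  · rw [Finset.card_insert_of_notMem]
    intro hm
    exact hv (Finset.mem_filter.1 hm).1
  · rfl

lemma maxcut_local {n : ℕ} {G : SimpleGraph (Fin n)} {L R : Finset (Fin n)}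
    (h : IsMaxCut G L R) (v : Fin n) (hv : v ∈ L) : degIn G L v ≤ degIn G R v := by
  obtain ⟨h1, h2⟩ := h
  have h3 := h2 (L.erase v)
  rw [cut_eq, cut_eq, ← Finset.add_sum_erase _ _ hv, ← h1] at h3
  have h4 : (L.erase v)ᶜ = insert v R := by
    rw [h1, Finset.compl_erase]
  have hvR : v ∉ R := by
    rw [h1, Finset.mem_compl, not_not]
    exact hv
  rw [h4, Finset.sum_congr rfl (fun a _ => degIn_insert G R v a hvR),
    Finset.sum_add_distrib] at h3
  have h5 : degIn G L v = ∑ a ∈ L.erase v, if G.Adj a v then 1 else 0 := by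
    rw [degIn_eq, Finset.card_filter, ← Finset.add_sum_erase _ _ hv]
    simp [G.adj_comm]
  omega


/-- The number of vertices of `A` not adjacent to `v`. -/
noncomputable def ms {n : ℕ} (G : SimpleGraph (Fin n)) (A : Finset (Fin n)) (v : Fin n) : ℕ :=
  (A.filter (fun u => ¬ G.Adj v u)).card

lemma degIn_add_ms {n : ℕ} (G : SimpleGraph (Fin n)) (A : Finset (Fin n)) (v : Fin n) :
    degIn G A v + ms G A v = A.card :=
  Finset.card_filter_add_card_filter_not _

lemma card_nb {n : ℕ} (G : SimpleGraph (Fin n)) (A : Finset (Fin n)) (v : Fin n) :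
    (nb G v).card = degIn G A v + degIn G Aᶜ v := by
  rw [degIn_eq, degIn_eq, ← Finset.card_union_of_disjoint]
  · congr 1
    ext w
    simp only [mem_nb, Finset.mem_union, Finset.mem_filter, Finset.mem_compl]
    tauto
  · rw [Finset.disjoint_left]
    intro a ha hb
    exact (Finset.mem_compl.1 (Finset.mem_filter.1 hb).1) (Finset.mem_filter.1 ha).1

/-- Rough structure of a maximum cut. -/
lemma stab (k : ℕ) (hk : 2 ≤ k) (θ : ℝ) (hθ : 0 < θ) : ∃ N : ℕ, ∀ n : ℕ, N ≤ n →
    ∀ G : SimpleGraph (Fin n), IsSpexWheel (2 * k + 1) G → ∀ L R : Finset (Fin n),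
    IsMaxCut G L R →
      (∑ v ∈ L, (ms G R v : ℝ) ≤ θ ^ 2 * n ^ 2 / 4) ∧
      ((L.card : ℝ) + R.card = n) ∧
      (|(L.card : ℝ) - n / 2| ≤ θ * n / 2) ∧
      (∀ v ∈ L, (degIn G L v : ℝ) < θ * n) := by
  obtain ⟨N1, hN1⟩ := codeg k hk (θ ^ 2 / 8) (by positivity)
  obtain ⟨N2, hN2⟩ := exists_nat_gt (4 / θ ^ 2)
  refine ⟨max 1 (max N1 N2), ?_⟩
  intro n hn G hG L R hcut
  have hn1 : 1 ≤ n := le_trans (le_max_left _ _) hn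
  have hn2 : N1 ≤ n := le_trans (le_trans (le_max_left _ _) (le_max_right _ _)) hn
  have hn3 : (N2 : ℝ) ≤ n := by
    exact_mod_cast le_trans (le_trans (le_max_right _ _) (le_max_right _ _)) hn
  have hnpos : (0 : ℝ) < n := by exact_mod_cast hn1
  have hn1r : (1 : ℝ) ≤ n := by exact_mod_cast hn1
  have hcod := hN1 n hn2 G hG.1
  have hlow := lam_lower hk hn1 G hG
  have hlarge : 4 < n * θ ^ 2 := by
    have := lt_of_lt_of_le hN2 hn3
    rwa [div_lt_iff₀ (by positivity)] at this
  have hRL : R = Lᶜ := hcut.1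
  have hsum : (L.card : ℝ) + R.card = n := by
    have : L.card + R.card = n := by
      rw [hRL, Finset.card_add_card_compl, Fintype.card_fin]
    exact_mod_cast this
  -- lower bound on the maximum cut
  have hcutlow : (n : ℝ) ^ 2 / 4 - θ ^ 2 * n ^ 2 / 4 ≤ cutCount G L := by
    obtain ⟨x, hx0, hx1, ⟨u, hu⟩, heig, _⟩ := spectral hn1 G
    have h1 : lam1 G ^ 2 ≤ ∑ v ∈ nb G u, ((nb G v).card : ℝ) := by
      calc lam1 G ^ 2 = lam1 G * (lam1 G * x u) := by rw [hu]; ring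
        _ = ∑ v ∈ nb G u, lam1 G * x v := by rw [← heig u, Finset.mul_sum]
        _ = ∑ v ∈ nb G u, ∑ w ∈ nb G v, x w := by
            refine Finset.sum_congr rfl fun v _ => ?_
            rw [heig v]
        _ ≤ ∑ v ∈ nb G u, ∑ w ∈ nb G v, (1 : ℝ) :=
            Finset.sum_le_sum fun v _ => Finset.sum_le_sum fun w _ => hx1 w
        _ = _ := by simp
    have h2 : ∑ v ∈ nb G u, ((nb G v).card : ℝ) =
        ∑ v ∈ nb G u, (((nb G u).filter (G.Adj v)).card : ℝ) + cutCount G (nb G u) := by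
      rw [cut_eq]
      push_cast
      rw [← Finset.sum_add_distrib]
      refine Finset.sum_congr rfl fun v _ => ?_
      rw [card_nb G (nb G u) v]
      push_cast
      rfl
    have h3 := hcod u
    have h4 : (cutCount G (nb G u) : ℝ) ≤ cutCount G L := by exact_mod_cast hcut.2 _
    have h5 : (((n : ℝ) - 1) / 2) ^ 2 ≤ lam1 G ^ 2 :=
      pow_le_pow_left₀ (by linarith) hlow 2
    nlinarith
  have hmiss : ∑ v ∈ L, (ms G R v : ℝ) = L.card * R.card - cutCount G L := by
    rw [cut_eq, ← hRL]
    push_cast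
    rw [eq_sub_iff_add_eq, ← Finset.sum_add_distrib]
    have : ∀ v ∈ L, (ms G R v : ℝ) + degIn G R v = R.card := by
      intro v _
      have := degIn_add_ms G R v
      rw [← this]
      push_cast
      ring
    rw [Finset.sum_congr rfl this, Finset.sum_const, nsmul_eq_mul]
  have hprod : (L.card : ℝ) * R.card = n ^ 2 / 4 - ((L.card : ℝ) - n / 2) ^ 2 := by
    have : (R.card : ℝ) = n - L.card := by linarith
    rw [this]
    ring
  have hmissnn : (0 : ℝ) ≤ ∑ v ∈ L, (ms G R v : ℝ) :=
    Finset.sum_nonneg fun i _ => Nat.cast_nonneg _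
  have hM : ∑ v ∈ L, (ms G R v : ℝ) ≤ θ ^ 2 * n ^ 2 / 4 := by
    rw [hmiss, hprod]
    nlinarith [sq_nonneg ((L.card : ℝ) - n / 2)]
  refine ⟨hM, hsum, ?_, ?_⟩
  · apply abs_le_of_sq_le_sq _ (by positivity)
    nlinarith
  · intro v hv
    by_contra hcon
    push Not at hcon
    have hloc := maxcut_local hcut v hv
    have hR : θ * n ≤ (degIn G R v : ℝ) := hcon.trans (by exact_mod_cast hloc)
    set A := L.filter (fun u => G.Adj v u) with hA
    set B := R.filter (fun u => G.Adj v u) with hB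
    have hAc : (degIn G L v : ℝ) = A.card := rfl
    have hBc : (degIn G R v : ℝ) = B.card := rfl
    have hAsub : A ⊆ nb G v := fun a ha => (mem_nb G v a).2 (Finset.mem_filter.1 ha).2
    have hBsub : B ⊆ nb G v := fun a ha => (mem_nb G v a).2 (Finset.mem_filter.1 ha).2
    have h1 : ∑ y ∈ A, ((B.filter (G.Adj y)).card : ℝ) ≤
        ∑ y ∈ nb G v, (((nb G v).filter (G.Adj y)).card : ℝ) := by
      refine le_trans (Finset.sum_le_sum fun y _ => ?_)
        (Finset.sum_le_sum_of_subset_of_nonneg hAsub fun _ _ _ => Nat.cast_nonneg _)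
      exact_mod_cast Finset.card_le_card (Finset.filter_subset_filter _ hBsub)
    have h2 : ∀ y ∈ A, (B.card : ℝ) - ms G R y ≤ (B.filter (G.Adj y)).card := by
      intro y _
      have e := degIn_add_ms G B y
      have e2 : ms G B y ≤ ms G R y :=
        Finset.card_le_card (Finset.filter_subset_filter _ (Finset.filter_subset _ _))
      have e3 : (B.card : ℝ) = degIn G B y + ms G B y := by exact_mod_cast e.symm
      have e4 : (ms G B y : ℝ) ≤ ms G R y := by exact_mod_cast e2
      have e5 : (degIn G B y : ℝ) = (B.filter (G.Adj y)).card := rfl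
      linarith
    have h3 := Finset.sum_le_sum h2
    rw [Finset.sum_sub_distrib, Finset.sum_const, nsmul_eq_mul] at h3
    have h4 : ∑ y ∈ A, (ms G R y : ℝ) ≤ ∑ y ∈ L, (ms G R y : ℝ) :=
      Finset.sum_le_sum_of_subset_of_nonneg (Finset.filter_subset _ _)
        fun _ _ _ => Nat.cast_nonneg _
    have h5 := hcod v
    have h6 : θ * n * (θ * n) ≤ (A.card : ℝ) * B.card :=
      mul_le_mul (by rw [← hAc]; exact hcon) (by rw [← hBc]; exact hR) (by positivity)
        (Nat.cast_nonneg _)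
    have h7 : 0 < θ ^ 2 * (n : ℝ) ^ 2 := by positivity
    nlinarith


/-- Size of a common neighbourhood. -/
lemma common {n : ℕ} (G : SimpleGraph (Fin n)) (P F : Finset (Fin n)) (m : ℝ)
    (h : ∀ q ∈ F, (ms G P q : ℝ) ≤ m) :
    (P.card : ℝ) - F.card * m ≤ (P.filter (fun p => ∀ q ∈ F, G.Adj q p)).card := by
  have hsub : P ⊆ P.filter (fun p => ∀ q ∈ F, G.Adj q p) ∪
      F.biUnion (fun q => P.filter (fun u => ¬ G.Adj q u)) := by
    intro p hp
    by_cases hq : ∀ q ∈ F, G.Adj q p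
    · exact Finset.mem_union_left _ (Finset.mem_filter.2 ⟨hp, hq⟩)
    · push Not at hq
      obtain ⟨q, hqF, hqp⟩ := hq
      exact Finset.mem_union_right _
        (Finset.mem_biUnion.2 ⟨q, hqF, Finset.mem_filter.2 ⟨hp, hqp⟩⟩)
  have h1 := (Finset.card_le_card hsub).trans (Finset.card_union_le _ _)
  have h2 : (F.biUnion (fun q => P.filter (fun u => ¬ G.Adj q u))).card ≤
      ∑ q ∈ F, ms G P q := Finset.card_biUnion_le
  have h3 : (∑ q ∈ F, (ms G P q : ℝ)) ≤ F.card * m := by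
    rw [← nsmul_eq_mul, ← Finset.sum_const]
    exact Finset.sum_le_sum h
  have h4 : (P.card : ℝ) ≤ (P.filter (fun p => ∀ q ∈ F, G.Adj q p)).card +
      ∑ q ∈ F, (ms G P q : ℝ) := by
    exact_mod_cast h1.trans (Nat.add_le_add_left h2 _)
  linarith

/-- One-sided estimate: the maximum Perron entry is attained in `P`. -/
lemma one_side {k n : ℕ} (hk : 2 ≤ k) (θ : ℝ) (hθ : 0 < θ) (hθk : θ * (100 * k) ≤ 1)
    (hn1 : 1 ≤ n) (hnθ : 4 ≤ θ * n) (hnk : 1000 * (k : ℝ) ≤ n)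
    (G : SimpleGraph (Fin n)) (hG : IsSpexWheel (2 * k + 1) G) (P Q : Finset (Fin n))
    (hPQ : Q = Pᶜ)
    (hmiss : ∑ v ∈ Q, (ms G P v : ℝ) ≤ θ ^ 2 * n ^ 2 / 4)
    (hPc : |(P.card : ℝ) - n / 2| ≤ θ * n / 2)
    (hQc : |(Q.card : ℝ) - n / 2| ≤ θ * n / 2)
    (hdegP : ∀ v ∈ P, (degIn G P v : ℝ) < θ * n)
    (x : Fin n → ℝ) (hx0 : ∀ v, 0 ≤ x v) (hx1 : ∀ v, x v ≤ 1) (u : Fin n) (hu : x u = 1)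
    (huP : u ∈ P) (heig : ∀ v, ∑ w ∈ nb G v, x w = lam1 G * x v) :
    (∀ v, 1 - 8 * θ ≤ x v) ∧ ∀ v, (n : ℝ) / 2 - 2 * θ * n ≤ (nb G v).card := by
  have hnpos : (0 : ℝ) < n := by exact_mod_cast hn1
  have hkr : (2 : ℝ) ≤ k := by exact_mod_cast hk
  have hlow := lam_lower hk hn1 G hG
  have hpos : 0 < lam1 G := by nlinarith
  rw [abs_le] at hPc hQc
  set Q' := Q.filter (fun q => (ms G P q : ℝ) ≤ θ * n) with hQ'
  set Q'' := Q.filter (fun q => ¬ (ms G P q : ℝ) ≤ θ * n) with hQ''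
  have hθn : 0 < θ * n := by positivity
  have hQ''c : (Q''.card : ℝ) ≤ θ * n / 4 := by
    have h1 : (Q''.card : ℝ) * (θ * n) ≤ ∑ v ∈ Q, (ms G P v : ℝ) := by
      rw [← nsmul_eq_mul, ← Finset.sum_const]
      refine le_trans (Finset.sum_le_sum (g := fun v => (ms G P v : ℝ)) fun q hq => ?_)
        (Finset.sum_le_sum_of_subset_of_nonneg (Finset.filter_subset _ _)
          fun _ _ _ => Nat.cast_nonneg _)
      have := (Finset.mem_filter.1 hq).2
      exact (not_le.1 this).le
    have h2 : (Q''.card : ℝ) * (θ * n) ≤ θ * n / 4 * (θ * n) := by nlinarith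
    exact le_of_mul_le_mul_right h2 hθn
  have hlamsplit : lam1 G = ∑ w ∈ P.filter (fun w => G.Adj u w), x w +
      ∑ w ∈ Q.filter (fun w => G.Adj u w), x w := by
    have h1 := heig u
    rw [hu, mul_one] at h1
    rw [← h1, ← Finset.sum_union]
    · refine Finset.sum_congr ?_ fun _ _ => rfl
      ext w
      simp only [mem_nb, Finset.mem_union, Finset.mem_filter, hPQ, Finset.mem_compl]
      tauto
    · rw [Finset.disjoint_left]
      intro a ha hb
      have h3 := (Finset.mem_filter.1 hb).1
      rw [hPQ] at h3
      exact (Finset.mem_compl.1 h3) (Finset.mem_filter.1 ha).1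
  have hP1 : ∑ w ∈ P.filter (fun w => G.Adj u w), x w ≤ θ * n := by
    refine le_trans (Finset.sum_le_sum (g := fun _ => (1 : ℝ)) fun w _ => hx1 w) ?_
    rw [Finset.sum_const, nsmul_eq_mul, mul_one]
    exact (hdegP u huP).le
  have hQ1 : ∑ w ∈ Q.filter (fun w => G.Adj u w), x w ≤ ∑ w ∈ Q, x w :=
    Finset.sum_le_sum_of_subset_of_nonneg (Finset.filter_subset _ _) fun w _ _ => hx0 w
  have hQ2 : ∑ w ∈ Q, x w ≤ Q.card := by
    refine le_trans (Finset.sum_le_sum (g := fun _ => (1 : ℝ)) fun w _ => hx1 w) ?_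
    rw [Finset.sum_const, nsmul_eq_mul, mul_one]
  have hQ3 : ∑ w ∈ Q, x w = ∑ w ∈ Q', x w + ∑ w ∈ Q'', x w :=
    (Finset.sum_filter_add_sum_filter_not _ _ _).symm
  have hQ4 : ∑ w ∈ Q'', x w ≤ Q''.card := by
    refine le_trans (Finset.sum_le_sum (g := fun _ => (1 : ℝ)) fun w _ => hx1 w) ?_
    rw [Finset.sum_const, nsmul_eq_mul, mul_one]
  have hadm : ∀ F Z : Finset (Fin n), F ⊆ Q' → F.card ≤ 2 * k + 1 → Z.card ≤ 2 * k + 1 →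
      ∃ v', v' ∉ Z ∧ ∀ q ∈ F, G.Adj v' q := by
    intro F Z hF hFc hZc
    have h1 := common G P F (θ * n) (fun q hq => (Finset.mem_filter.1 (hF hq)).2)
    have hFc' : (F.card : ℝ) ≤ 2 * k + 1 := by exact_mod_cast hFc
    have hZc' : (Z.card : ℝ) ≤ 2 * k + 1 := by exact_mod_cast hZc
    have h2 : (Z.card : ℝ) < (P.filter (fun p => ∀ q ∈ F, G.Adj q p)).card := by
      have h3 : (F.card : ℝ) * (θ * n) ≤ (2 * k + 1) * (θ * n) :=
        mul_le_mul_of_nonneg_right hFc' hθn.le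
      have h4 : θ * (100 * k) * n ≤ 1 * n := mul_le_mul_of_nonneg_right hθk hnpos.le
      nlinarith
    obtain ⟨v', hv', hv'Z⟩ := Finset.exists_mem_notMem_of_card_lt_card
      (by exact_mod_cast h2 : Z.card < (P.filter (fun p => ∀ q ∈ F, G.Adj q p)).card)
    exact ⟨v', hv'Z, fun q hq => ((Finset.mem_filter.1 hv').2 q hq).symm⟩
  have hmain : ∀ v, (n : ℝ) / 2 - 2 * θ * n ≤ lam1 G * x v := by
    intro v
    have h1 := reattach_bound hn1 G hG hpos x hx0 heig v Q' hadm
    have h2 : ∑ w ∈ Q', x w ≤ ∑ w ∈ Q'.erase v, x w + 1 := by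
      by_cases hv : v ∈ Q'
      · rw [← Finset.add_sum_erase _ _ hv]
        linarith [hx1 v]
      · rw [Finset.erase_eq_of_notMem hv]
        linarith
    linarith
  refine ⟨fun v => ?_, fun v => ?_⟩
  · have h1 := hmain v
    have hup : lam1 G ≤ n / 2 + 3 / 2 * θ * n := by linarith
    have h2 : lam1 G * x v ≤ (n / 2 + 3 / 2 * θ * n) * x v :=
      mul_le_mul_of_nonneg_right hup (hx0 v)
    by_contra hcon
    push Not at hcon
    have h3 : ((n : ℝ) / 2 + 3 / 2 * θ * n) * x v < (n / 2 + 3 / 2 * θ * n) * (1 - 8 * θ) :=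
      mul_lt_mul_of_pos_left hcon (by positivity)
    nlinarith [mul_pos hθn hθ]
  · have h1 := hmain v
    rw [← heig v] at h1
    refine h1.trans (le_trans (Finset.sum_le_sum (g := fun _ => (1 : ℝ)) fun w _ => hx1 w) ?_)
    rw [Finset.sum_const, nsmul_eq_mul, mul_one]

/-- Internal degrees are at most `k - 1`. -/
lemma int_deg {k n : ℕ} (hk : 2 ≤ k) (θ : ℝ) (hθ : 0 < θ) (hθk : θ * (100 * k) ≤ 1)
    (hnk : 1000 * (k : ℝ) ≤ n)
    (G : SimpleGraph (Fin n)) (hG : WheelFree (2 * k + 1) G) (P Q : Finset (Fin n))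
    (hQc : |(Q.card : ℝ) - n / 2| ≤ θ * n / 2)
    (hms : ∀ v ∈ P, (ms G Q v : ℝ) ≤ 4 * θ * n) :
    ∀ v ∈ P, degIn G P v < k := by
  intro v hv
  by_contra hcon
  push Not at hcon
  rw [degIn_eq] at hcon
  obtain ⟨T, hT, hTc⟩ := Finset.exists_subset_card_eq hcon
  have hF : ∀ q ∈ insert v T, (ms G Q q : ℝ) ≤ 4 * θ * n := by
    intro q hq
    rcases Finset.mem_insert.1 hq with rfl | hq
    · exact hms _ hv
    · exact hms _ (Finset.mem_filter.1 (hT hq)).1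
  have h1 := common G Q _ _ hF
  set C := Q.filter (fun p => ∀ q ∈ insert v T, G.Adj q p) with hC
  have hcard : ((insert v T).card : ℝ) ≤ k + 1 := by
    have := Finset.card_insert_le v T
    rw [hTc] at this
    exact_mod_cast this
  rw [abs_le] at hQc
  have hkr : (2 : ℝ) ≤ k := by exact_mod_cast hk
  have hnpos : (0 : ℝ) < n := by linarith
  have hCk : (k : ℝ) ≤ C.card := by
    have h3 : ((insert v T).card : ℝ) * (4 * θ * n) ≤ (k + 1) * (4 * θ * n) :=
      mul_le_mul_of_nonneg_right hcard (by positivity)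
    have h4 : θ * (100 * k) * n ≤ 1 * n := mul_le_mul_of_nonneg_right hθk hnpos.le
    have h5 : 0 < θ * n := by positivity
    nlinarith
  refine hG (copy_of_bip hk G v T C hTc.ge (by exact_mod_cast hCk) ?_ ?_ ?_)
  · intro a ha
    exact (Finset.mem_filter.1 (hT ha)).2
  · intro b hb
    exact (Finset.mem_filter.1 hb).2 v (Finset.mem_insert_self _ _)
  · intro a ha b hb
    exact (Finset.mem_filter.1 hb).2 a (Finset.mem_insert_of_mem ha)

/-- Fine structure of a maximum cut. -/
lemma fine (k : ℕ) (hk : 2 ≤ k) (θ : ℝ) (hθ : 0 < θ) (hθk : θ * (100 * k) ≤ 1) :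
    ∃ N : ℕ, ∀ n : ℕ, N ≤ n →
    ∀ G : SimpleGraph (Fin n), IsSpexWheel (2 * k + 1) G → ∀ L R : Finset (Fin n),
    IsMaxCut G L R →
      (|(L.card : ℝ) - n / 2| ≤ θ * n / 2) ∧ (|(R.card : ℝ) - n / 2| ≤ θ * n / 2) ∧
      (∀ v ∈ L, (ms G R v : ℝ) ≤ 4 * θ * n) ∧ (∀ v ∈ R, (ms G L v : ℝ) ≤ 4 * θ * n) ∧
      (∀ v ∈ L, degIn G L v < k) ∧ (∀ v ∈ R, degIn G R v < k) ∧
      ∃ x : Fin n → ℝ, (∀ v, x v ≤ 1) ∧ (∀ v, 1 - 8 * θ ≤ x v) ∧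
        quad G x = lam1 G * ∑ i, x i ^ 2 := by
  obtain ⟨N1, hN1⟩ := stab k hk θ hθ
  obtain ⟨N2, hN2⟩ := exists_nat_gt (4 / θ)
  refine ⟨max (1000 * k) (max N1 N2), ?_⟩
  intro n hn G hG L R hcut
  have hn0 : 1000 * k ≤ n := le_trans (le_max_left _ _) hn
  have hn1 : 1 ≤ n := by omega
  have hn2 : N1 ≤ n := le_trans (le_trans (le_max_left _ _) (le_max_right _ _)) hn
  have hn3 : (N2 : ℝ) ≤ n := by
    exact_mod_cast le_trans (le_trans (le_max_right _ _) (le_max_right _ _)) hn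
  have hnk : 1000 * (k : ℝ) ≤ n := by exact_mod_cast hn0
  have hnθ : 4 ≤ θ * n := by
    have := (lt_of_lt_of_le hN2 hn3).le
    rw [div_le_iff₀ hθ] at this
    linarith
  have hcut' := maxcut_symm hcut
  obtain ⟨hmL, hsum, hLc, hLi⟩ := hN1 n hn2 G hG L R hcut
  obtain ⟨hmR, _, hRc, hRi⟩ := hN1 n hn2 G hG R L hcut'
  obtain ⟨x, hx0, hx1, ⟨u, hu⟩, heig, _⟩ := spectral hn1 G
  have hside : (∀ v, 1 - 8 * θ ≤ x v) ∧ ∀ v, (n : ℝ) / 2 - 2 * θ * n ≤ (nb G v).card := by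
    by_cases huL : u ∈ L
    · exact one_side hk θ hθ hθk hn1 hnθ hnk G hG L R hcut.1 hmR hLc hRc hLi x hx0 hx1 u hu huL
        heig
    · have huR : u ∈ R := by
        rw [hcut.1]
        exact Finset.mem_compl.2 huL
      exact one_side hk θ hθ hθk hn1 hnθ hnk G hG R L hcut'.1 hmL hRc hLc hRi x hx0 hx1 u hu huR
        heig
  have hms : ∀ P Q : Finset (Fin n), Q = Pᶜ → |(Q.card : ℝ) - n / 2| ≤ θ * n / 2 →
      (∀ v ∈ P, (degIn G P v : ℝ) < θ * n) → ∀ v ∈ P, (ms G Q v : ℝ) ≤ 4 * θ * n := by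
    intro P Q hPQ hQc hPi v hv
    have h1 := hside.2 v
    rw [card_nb G P v, ← hPQ] at h1
    push_cast at h1
    have h2 := hPi v hv
    have h3 : (degIn G Q v : ℝ) + ms G Q v = Q.card := by exact_mod_cast degIn_add_ms G Q v
    rw [abs_le] at hQc
    nlinarith
  have hmsL := hms L R hcut.1 hRc hLi
  have hmsR := hms R L hcut'.1 hLc hRi
  refine ⟨hLc, hRc, hmsL, hmsR, int_deg hk θ hθ hθk hnk G hG.1 L R hRc hmsL,
    int_deg hk θ hθ hθk hnk G hG.1 R L hLc hmsR, x, hx1, hside.1, ?_⟩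
  unfold quad
  rw [Finset.mul_sum]
  refine Finset.sum_congr rfl fun i _ => ?_
  rw [heig i]
  ring


lemma no_two {n k : ℕ} (hk : 3 ≤ k) (G : SimpleGraph (Fin n)) (hG : WheelFree (2 * k + 1) G)
    (v : Fin n) (T C : Finset (Fin n)) (hT : T.card = k - 1) (hvT : ∀ t ∈ T, G.Adj v t)
    (hC : k + 6 ≤ C.card) (hTC : ∀ c ∈ C, ∀ t ∈ insert v T, G.Adj t c)
    (p q r s : Fin n) (hp : p ∈ C) (hq : q ∈ C) (hr : r ∈ C) (hs : s ∈ C)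
    (hpq : G.Adj p q) (hrs : G.Adj r s) (h1 : ¬ (p = r ∧ q = s)) (h2 : ¬ (p = s ∧ q = r)) :
    False := by
  have hvC : ∀ c ∈ C, G.Adj v c := fun c hc => hTC c hc v (Finset.mem_insert_self _ _)
  have hTC' : ∀ t ∈ T, ∀ c ∈ C, G.Adj t c := fun t ht c hc =>
    hTC c hc t (Finset.mem_insert_of_mem ht)
  apply hG
  by_cases e1 : p = r
  · subst e1
    exact copy_of_two_path hk G v T C hT hvT hC hvC hTC' q p s hq hp hs hpq.symm hrs (by tauto)
  by_cases e2 : p = s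
  · subst e2
    exact copy_of_two_path hk G v T C hT hvT hC hvC hTC' q p r hq hp hr hpq.symm hrs.symm
      (by tauto)
  by_cases e3 : q = r
  · subst e3
    exact copy_of_two_path hk G v T C hT hvT hC hvC hTC' p q s hp hq hs hpq hrs (by tauto)
  by_cases e4 : q = s
  · subst e4
    exact copy_of_two_path hk G v T C hT hvT hC hvC hTC' p q r hp hq hr hpq hrs.symm (by tauto)
  exact copy_of_two_disj hk G v T C hT hvT hC hvC hTC' p q r s hp hq hr hs hpq hrs e1 e2 e3 e4

lemma block_exists {n k : ℕ} (hk : 1 ≤ k) (L : Finset (Fin n)) (hL : k ≤ L.card) :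
    ∃ β : Fin n → ℕ, (∀ m, (L.filter (fun a => β a = m)).card ≤ k) ∧
      ((k : ℝ) - 1) * (L.card - k) ≤ ∑ a ∈ L, (degIn (blockGraph L β) L a : ℝ) := by
  set idx : Fin n → ℕ := fun v => if h : v ∈ L then (L.equivFin ⟨v, h⟩).val else 0 with hidx
  have hinj : Set.InjOn idx L := by
    intro a ha b hb hab
    have ha' : a ∈ L := ha
    have hb' : b ∈ L := hb
    simp only [hidx, ha', hb', dif_pos] at hab
    have := L.equivFin.injective (Fin.ext hab)
    simpa using this
  have hlt : ∀ a ∈ L, idx a < L.card := by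
    intro a ha
    simp only [hidx, ha, dif_pos]
    exact (L.equivFin ⟨a, ha⟩).isLt
  have hsurj : ∀ i, i < L.card → ∃ a ∈ L, idx a = i := by
    intro i hi
    refine ⟨L.equivFin.symm ⟨i, hi⟩, (L.equivFin.symm ⟨i, hi⟩).2, ?_⟩
    simp [hidx]
  have hfib : ∀ m, (L.filter (fun a => idx a / k = m)).image idx ⊆ Finset.Ico (m * k) (m * k + k) := by
    intro m i hi
    obtain ⟨a, ha, rfl⟩ := Finset.mem_image.1 hi
    have h1 := (Finset.mem_filter.1 ha).2
    have h2 := Nat.div_add_mod (idx a) k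
    have h3 := Nat.mod_lt (idx a) (show 0 < k by omega)
    rw [h1] at h2
    rw [Finset.mem_Ico]
    have h4 : k * m = m * k := mul_comm _ _
    constructor <;> omega
  have hfibcard : ∀ m, ((L.filter (fun a => idx a / k = m)).image idx).card =
      (L.filter (fun a => idx a / k = m)).card := by
    intro m
    apply Finset.card_image_of_injOn
    exact hinj.mono (by intro a ha; exact (Finset.mem_filter.1 (Finset.mem_coe.1 ha)).1)
  refine ⟨fun a => idx a / k, ?_, ?_⟩
  · intro m
    rw [← hfibcard m]
    refine (Finset.card_le_card (hfib m)).trans ?_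
    simp
  · set H := blockGraph L (fun a => idx a / k) with hH
    set A := L.filter (fun a => idx a + k ≤ L.card) with hA
    have hdeg : ∀ a ∈ A, (k : ℝ) - 1 ≤ degIn H L a := by
      intro a ha
      obtain ⟨haL, hak⟩ := Finset.mem_filter.1 ha
      have h0 : (L.filter (fun b => idx b / k = idx a / k)).card = k := by
        rw [← hfibcard]
        have : (L.filter (fun b => idx b / k = idx a / k)).image idx =
            Finset.Ico (idx a / k * k) (idx a / k * k + k) := by
          apply Finset.Subset.antisymm (hfib _)
          intro i hi
          rw [Finset.mem_Ico] at hi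
          have h2 := Nat.div_mul_le_self (idx a) k
          obtain ⟨b, hb, hbi⟩ := hsurj i (by omega)
          refine Finset.mem_image.2 ⟨b, Finset.mem_filter.2 ⟨hb, ?_⟩, hbi⟩
          rw [hbi]
          apply Nat.div_eq_of_lt_le
          · exact hi.1
          · rw [Nat.add_mul, one_mul]
            exact hi.2
        rw [this]
        simp
      have h1 : (L.filter (fun b => idx b / k = idx a / k)).erase a ⊆
          L.filter (fun u => H.Adj a u) := by
        intro b hb
        obtain ⟨hba, hb'⟩ := Finset.mem_erase.1 hb
        obtain ⟨hbL, hbi⟩ := Finset.mem_filter.1 hb'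
        exact Finset.mem_filter.2 ⟨hbL, hba.symm, Or.inr (Or.inr ⟨haL, hbL, hbi.symm⟩)⟩
      have h2 := Finset.card_le_card h1
      have hmem : a ∈ L.filter (fun b => idx b / k = idx a / k) :=
        Finset.mem_filter.2 ⟨haL, rfl⟩
      rw [Finset.card_erase_of_mem hmem, h0] at h2
      have h3 : k ≤ degIn H L a + 1 := by
        rw [degIn_eq]
        omega
      have h4 : (k : ℝ) ≤ degIn H L a + 1 := by exact_mod_cast h3
      linarith
    have hAc : (L.card : ℝ) - k ≤ A.card := by
      have h1 : (L.filter (fun a => ¬ idx a + k ≤ L.card)).card ≤ k := by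
        have h2 : (L.filter (fun a => ¬ idx a + k ≤ L.card)).image idx ⊆
            Finset.Ico (L.card - k) L.card := by
          intro i hi
          obtain ⟨a, ha, rfl⟩ := Finset.mem_image.1 hi
          obtain ⟨haL, hak⟩ := Finset.mem_filter.1 ha
          rw [Finset.mem_Ico]
          exact ⟨by omega, hlt a haL⟩
        have h3 : ((L.filter (fun a => ¬ idx a + k ≤ L.card)).image idx).card =
            (L.filter (fun a => ¬ idx a + k ≤ L.card)).card := by
          apply Finset.card_image_of_injOn
          exact hinj.mono (by intro a ha; exact (Finset.mem_filter.1 (Finset.mem_coe.1 ha)).1)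
        rw [← h3]
        refine (Finset.card_le_card h2).trans ?_
        rw [Nat.card_Ico]
        omega
      have h2 : A.card + (L.filter (fun a => ¬ idx a + k ≤ L.card)).card = L.card :=
        Finset.card_filter_add_card_filter_not _
      have h3 : L.card ≤ A.card + k := by omega
      have h4 : (L.card : ℝ) ≤ A.card + k := by exact_mod_cast h3
      linarith
    have hk1 : (0 : ℝ) ≤ (k : ℝ) - 1 := by
      have : (1 : ℝ) ≤ k := by exact_mod_cast hk
      linarith
    calc ((k : ℝ) - 1) * (L.card - k) ≤ (k - 1) * A.card := mul_le_mul_of_nonneg_left hAc hk1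
      _ = ∑ a ∈ A, ((k : ℝ) - 1) := by rw [Finset.sum_const, nsmul_eq_mul, mul_comm]
      _ ≤ ∑ a ∈ A, (degIn H L a : ℝ) := Finset.sum_le_sum hdeg
      _ ≤ _ := Finset.sum_le_sum_of_subset_of_nonneg (Finset.filter_subset _ _)
        fun _ _ _ => Nat.cast_nonneg _

/-- Contribution of a pair of vertex sets to the quadratic form. -/
noncomputable def part {n : ℕ} (G : SimpleGraph (Fin n)) (x : Fin n → ℝ)
    (A B : Finset (Fin n)) : ℝ :=
  ∑ i ∈ A, ∑ j ∈ B, if G.Adj i j then x i * x j else 0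

lemma quad_parts {n : ℕ} (G : SimpleGraph (Fin n)) (x : Fin n → ℝ) (L : Finset (Fin n)) :
    quad G x = part G x L L + part G x L Lᶜ + (part G x Lᶜ L + part G x Lᶜ Lᶜ) := by
  unfold part
  rw [quad_eq, ← Finset.sum_add_distrib, ← Finset.sum_add_distrib,
    ← Finset.sum_add_sum_compl L]
  congr 1 <;>
  · refine Finset.sum_congr rfl fun i _ => ?_
    rw [Finset.sum_add_sum_compl]

lemma part_le {n : ℕ} (G : SimpleGraph (Fin n)) (x : Fin n → ℝ) (hx0 : ∀ v, 0 ≤ x v)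
    (hx1 : ∀ v, x v ≤ 1) (A : Finset (Fin n)) :
    part G x A A ≤ ∑ a ∈ A, (degIn G A a : ℝ) := by
  unfold part
  refine Finset.sum_le_sum fun i _ => ?_
  rw [degIn_eq, Finset.card_filter]
  push_cast
  refine Finset.sum_le_sum fun j _ => ?_
  split_ifs
  · exact mul_le_one₀ (hx1 i) (hx0 j) (hx1 j)
  · exact le_rfl

lemma part_ge {n : ℕ} (G : SimpleGraph (Fin n)) (x : Fin n → ℝ) (c : ℝ) (hc : 0 ≤ c)
    (hx : ∀ v, c ≤ x v) (A : Finset (Fin n)) :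
    c ^ 2 * ∑ a ∈ A, (degIn G A a : ℝ) ≤ part G x A A := by
  unfold part
  rw [Finset.mul_sum]
  refine Finset.sum_le_sum fun i _ => ?_
  rw [degIn_eq, Finset.card_filter]
  push_cast
  rw [Finset.mul_sum]
  refine Finset.sum_le_sum fun j _ => ?_
  split_ifs
  · rw [mul_one, sq]
    exact mul_le_mul (hx i) (hx j) hc (hc.trans (hx i))
  · simp

lemma part_mono {n : ℕ} (G H : SimpleGraph (Fin n)) (x : Fin n → ℝ) (hx0 : ∀ v, 0 ≤ x v)
    (A B : Finset (Fin n)) (h : ∀ a ∈ A, ∀ b ∈ B, G.Adj a b → H.Adj a b) :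
    part G x A B ≤ part H x A B := by
  unfold part
  refine Finset.sum_le_sum fun i hi => Finset.sum_le_sum fun j hj => ?_
  by_cases h1 : G.Adj i j
  · rw [if_pos h1, if_pos (h i hi j hj h1)]
  · rw [if_neg h1]
    split_ifs
    · exact mul_nonneg (hx0 i) (hx0 j)
    · exact le_rfl

lemma part_nonneg {n : ℕ} (G : SimpleGraph (Fin n)) (x : Fin n → ℝ) (hx0 : ∀ v, 0 ≤ x v)
    (A B : Finset (Fin n)) : 0 ≤ part G x A B := by
  unfold part
  refine Finset.sum_nonneg fun i _ => Finset.sum_nonneg fun j _ => ?_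
  split_ifs
  · exact mul_nonneg (hx0 i) (hx0 j)
  · exact le_rfl

/-- Comparison with the block construction. -/
lemma compare {n k : ℕ} (hk : 2 ≤ k) (hn : 1 ≤ n) (G : SimpleGraph (Fin n))
    (hG : IsSpexWheel (2 * k + 1) G) (L : Finset (Fin n)) (hL : k ≤ L.card)
    (x : Fin n → ℝ) (c : ℝ) (hc : 0 ≤ c) (hxc : ∀ v, c ≤ x v) (hx1 : ∀ v, x v ≤ 1)
    (hq : quad G x = lam1 G * ∑ i, x i ^ 2) :
    c ^ 2 * (((k : ℝ) - 1) * (L.card - k)) ≤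
      ∑ a ∈ L, (degIn G L a : ℝ) + ∑ a ∈ Lᶜ, (degIn G Lᶜ a : ℝ) := by
  have hx0 : ∀ v, 0 ≤ x v := fun v => hc.trans (hxc v)
  obtain ⟨β, hβ, hβsum⟩ := block_exists (show 1 ≤ k by omega) L hL
  set H := blockGraph L β with hH
  have hlam := hG.2 H (blockGraph_free hk L β hβ)
  obtain ⟨_, _, _, _, _, hbound⟩ := spectral hn H
  have h1 : quad H x ≤ quad G x := by
    rw [hq]
    exact (hbound x).trans
      (mul_le_mul_of_nonneg_right hlam (Finset.sum_nonneg fun _ _ => sq_nonneg _))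
  rw [quad_parts H x L, quad_parts G x L] at h1
  have h2 : part G x L Lᶜ ≤ part H x L Lᶜ := by
    apply part_mono G H x hx0
    intro a ha b hb hab
    exact ⟨hab.ne, Or.inl ⟨ha, Finset.mem_compl.1 hb⟩⟩
  have h3 : part G x Lᶜ L ≤ part H x Lᶜ L := by
    apply part_mono G H x hx0
    intro a ha b hb hab
    exact ⟨hab.ne, Or.inr (Or.inl ⟨Finset.mem_compl.1 ha, hb⟩)⟩
  have h4 := part_nonneg H x hx0 Lᶜ Lᶜ
  have h5 := part_ge H x c hc hxc L
  have h6 := part_le G x hx0 hx1 L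
  have h7 := part_le G x hx0 hx1 Lᶜ
  have h8 := mul_le_mul_of_nonneg_left hβsum (sq_nonneg c)
  linarith

lemma degIn_mono {n : ℕ} (G : SimpleGraph (Fin n)) {A B : Finset (Fin n)} (h : A ⊆ B)
    (v : Fin n) : degIn G A v ≤ degIn G B v :=
  Finset.card_le_card (Finset.filter_subset_filter _ h)

/-- Few internal edges in `R` if there are few in a large part `C`. -/
lemma sum_internal {n k : ℕ} (G : SimpleGraph (Fin n)) (R C : Finset (Fin n)) (hCR : C ⊆ R)
    (hR : ∀ v ∈ R, degIn G R v ≤ k)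
    (hC : ∀ p ∈ C, ∀ q ∈ C, ∀ r ∈ C, ∀ s ∈ C, G.Adj p q → G.Adj r s →
      ¬ (p = r ∧ q = s) → ¬ (p = s ∧ q = r) → False) :
    ∑ a ∈ R, degIn G R a ≤ 2 + 2 * (k * (R \ C).card) := by
  set D := R \ C with hD
  have hsplit : ∀ a, degIn G R a = degIn G D a + degIn G C a := by
    intro a
    rw [degIn_eq, degIn_eq, degIn_eq, ← Finset.card_union_of_disjoint]
    · rw [← Finset.filter_union, Finset.sdiff_union_of_subset hCR]
    · exact Finset.disjoint_filter_filter Finset.sdiff_disjoint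
  have h1 : ∑ a ∈ R, degIn G D a = ∑ d ∈ D, degIn G R d := by
    have := Finset.sum_card_bipartiteAbove_eq_sum_card_bipartiteBelow (s := R) (t := D)
      (fun a b => G.Adj a b)
    simp only [degIn_eq]
    refine this.trans (Finset.sum_congr rfl fun d _ => ?_)
    unfold Finset.bipartiteBelow
    simp only [G.adj_comm d]
  have h2 : ∑ d ∈ D, degIn G R d ≤ k * D.card := by
    rw [mul_comm, ← smul_eq_mul, ← Finset.sum_const]
    exact Finset.sum_le_sum fun d hd => hR d (Finset.mem_sdiff.1 hd).1
  have h3 : ∑ a ∈ D, degIn G C a ≤ k * D.card :=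
    le_trans (Finset.sum_le_sum fun d _ => degIn_mono G hCR d) h2
  have h4 : ∑ a ∈ C, degIn G C a ≤ 2 := by
    have e : ∑ a ∈ C, degIn G C a = ((C ×ˢ C).filter (fun p => G.Adj p.1 p.2)).card := by
      rw [Finset.card_filter, Finset.sum_product]
      refine Finset.sum_congr rfl fun a _ => ?_
      rw [degIn_eq, Finset.card_filter]
    rw [e]
    rcases Finset.eq_empty_or_nonempty ((C ×ˢ C).filter (fun p => G.Adj p.1 p.2)) with h | h
    · rw [h]
      simp
    · obtain ⟨⟨p, q⟩, hpq⟩ := h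
      rw [Finset.mem_filter, Finset.mem_product] at hpq
      refine le_trans (Finset.card_le_card (t := {(p, q), (q, p)}) ?_) Finset.card_le_two
      rintro ⟨r, s⟩ hrs
      rw [Finset.mem_filter, Finset.mem_product] at hrs
      by_contra hcon
      simp only [Finset.mem_insert, Finset.mem_singleton, Prod.mk.injEq, not_or] at hcon
      exact hC p hpq.1.1 q hpq.1.2 r hrs.1.1 s hrs.1.2 hpq.2 hrs.2
        (fun h => hcon.1 ⟨h.1.symm, h.2.symm⟩) (fun h => hcon.2 ⟨h.2.symm, h.1.symm⟩)
  have h5 : ∑ a ∈ R, degIn G C a = ∑ a ∈ D, degIn G C a + ∑ a ∈ C, degIn G C a :=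
    (Finset.sum_sdiff hCR).symm
  rw [Finset.sum_congr rfl (fun a _ => hsplit a), Finset.sum_add_distrib, h1, h5]
  omega


set_option maxHeartbeats 1000000 in
lemma final (k : ℕ) (hk : 3 ≤ k) :
    ∃ N : ℕ, ∀ n : ℕ, N ≤ n → ∀ G : SimpleGraph (Fin n), IsSpexWheel (2 * k + 1) G →
      ∀ L R : Finset (Fin n), IsMaxCut G L R →
        (∃ v ∈ L, degIn G L v = k - 1) →
        4 * k ^ 2 + 1 ≤ (L.filter (fun v => degIn G L v = k - 1)).card ∧
        ∀ p ∈ R, ∀ q ∈ R, ∀ r ∈ R, ∀ s ∈ R, G.Adj p q → G.Adj r s →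
          ¬ (p = r ∧ q = s) → ¬ (p = s ∧ q = r) → False := by
  have hk3 : (3 : ℝ) ≤ k := by exact_mod_cast hk
  have hk0 : (0 : ℝ) < k := by linarith
  obtain ⟨θ, hθdef⟩ : ∃ θ : ℝ, θ = 1 / (1000 * (k : ℝ) ^ 3) := ⟨_, rfl⟩
  have hθ : 0 < θ := by rw [hθdef]; positivity
  have hθ3 : θ * k ^ 3 = 1 / 1000 := by rw [hθdef]; field_simp
  have hθ2 : θ * k ^ 2 ≤ 1 / 3000 := by
    have h : θ * k ^ 3 = (θ * k ^ 2) * k := by ring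
    have h' : (θ * k ^ 2) * 3 ≤ (θ * k ^ 2) * k :=
      mul_le_mul_of_nonneg_left hk3 (by positivity)
    linarith
  have hθ1 : θ * k ≤ 1 / 9000 := by
    have h : θ * k ^ 2 = (θ * k) * k := by ring
    have h' : (θ * k) * 3 ≤ (θ * k) * k :=
      mul_le_mul_of_nonneg_left hk3 (by positivity)
    linarith
  have hθ0 : θ ≤ 1 / 27000 := by
    have h' : θ * 3 ≤ θ * k := mul_le_mul_of_nonneg_left hk3 hθ.le
    linarith
  obtain ⟨N, hN⟩ := fine k (by omega) θ hθ (by nlinarith)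
  refine ⟨max N (1000 * k ^ 2), ?_⟩
  intro n hn G hG L R hcut ⟨v0, hv0, hdv0⟩
  have hnN : N ≤ n := le_trans (le_max_left _ _) hn
  have hnk : 1000 * k ^ 2 ≤ n := le_trans (le_max_right _ _) hn
  have hnk' : 1000 * (k : ℝ) ^ 2 ≤ n := by exact_mod_cast hnk
  have hk2 : 3 * (k : ℝ) ≤ k ^ 2 := by nlinarith
  have hn0 : (0 : ℝ) < n := by linarith
  have hn1 : 1 ≤ n := by exact_mod_cast (show (0 : ℝ) < n from hn0)
  obtain ⟨hLc, hRc, hmsL, hmsR, hdL, hdR, x, hx1, hxc, hq⟩ := hN n hnN G hG L R hcut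
  rw [abs_le] at hLc hRc
  have hθn : θ * n ≤ n / 27000 := by nlinarith
  have hθkn : θ * k * n ≤ n / 9000 := by nlinarith
  have hθk2n : θ * k ^ 2 * n ≤ n / 3000 := by nlinarith
  -- common neighbourhoods
  have key : ∀ v ∈ L, degIn G L v = k - 1 → ∀ C : Finset (Fin n),
      C = R.filter (fun c => ∀ q ∈ insert v (L.filter (fun u => G.Adj v u)), G.Adj q c) →
      (R.card : ℝ) - 4 * (θ * k * n) ≤ C.card ∧
      ∀ p ∈ C, ∀ q ∈ C, ∀ r ∈ C, ∀ s ∈ C, G.Adj p q → G.Adj r s →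
          ¬ (p = r ∧ q = s) → ¬ (p = s ∧ q = r) → False := by
    intro v hv hdv C hC
    have hsubL : ∀ q ∈ insert v (L.filter (fun u => G.Adj v u)), q ∈ L := by
      intro q hq
      rcases Finset.mem_insert.1 hq with h | h
      · exact h ▸ hv
      · exact (Finset.mem_filter.1 h).1
    have hcom := common G R (insert v (L.filter (fun u => G.Adj v u))) (4 * θ * n)
      (fun q hq => hmsL q (hsubL q hq))
    rw [← hC] at hcom
    have hTc : (L.filter (fun u => G.Adj v u)).card = k - 1 := hdv
    have hic : (insert v (L.filter (fun u => G.Adj v u))).card ≤ k := by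
      refine (Finset.card_insert_le _ _).trans ?_
      omega
    have hic' : ((insert v (L.filter (fun u => G.Adj v u))).card : ℝ) ≤ k := by
      exact_mod_cast hic
    have h1 : ((insert v (L.filter (fun u => G.Adj v u))).card : ℝ) * (4 * θ * n) ≤
        k * (4 * θ * n) := mul_le_mul_of_nonneg_right hic' (by positivity)
    have h2 : (R.card : ℝ) - 4 * (θ * k * n) ≤ C.card := by nlinarith
    refine ⟨h2, ?_⟩
    have h3 : k + 6 ≤ C.card := by
      have : (k : ℝ) + 6 ≤ C.card := by linarith
      exact_mod_cast this
    intro p hp q hq r hr s hs hpq hrs e1 e2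
    refine no_two hk G hG.1 v (L.filter (fun u => G.Adj v u)) C hTc
      (fun t ht => (Finset.mem_filter.1 ht).2) h3 ?_ p q r s hp hq hr hs hpq hrs e1 e2
    intro c hc t ht
    rw [hC] at hc
    exact (Finset.mem_filter.1 hc).2 t ht
  -- many vertices of maximum internal degree
  obtain ⟨A, hA⟩ : ∃ A : Finset (Fin n), A = L.filter (fun v => degIn G L v = k - 1) := ⟨_, rfl⟩
  have hAbig : (n : ℝ) / 4 ≤ A.card := by
    obtain ⟨C, hC⟩ : ∃ C : Finset (Fin n), C = R.filter (fun c =>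
      ∀ q ∈ insert v0 (L.filter (fun u => G.Adj v0 u)), G.Adj q c) := ⟨_, rfl⟩
    obtain ⟨hCc, hC2⟩ := key v0 hv0 hdv0 C hC
    have hCR : C ⊆ R := by rw [hC]; exact Finset.filter_subset _ _
    have hsum := sum_internal (k := k) G R C hCR (fun v hv => (hdR v hv).le) hC2
    have hsum' : ∑ a ∈ R, (degIn G R a : ℝ) ≤ 2 + 2 * (k * ((R \ C).card : ℝ)) := by
      exact_mod_cast hsum
    have hsd : ((R \ C).card : ℝ) ≤ 4 * (θ * k * n) := by
      have h := Finset.card_sdiff_add_card_eq_card hCR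
      have h' : ((R \ C).card : ℝ) + C.card = R.card := by exact_mod_cast h
      linarith
    have hsd2 : (k : ℝ) * ((R \ C).card : ℝ) ≤ k * (4 * (θ * k * n)) :=
      mul_le_mul_of_nonneg_left hsd hk0.le
    have hsd3 : (k : ℝ) * (4 * (θ * k * n)) = 4 * (θ * k ^ 2 * n) := by ring
    have hLk : k ≤ L.card := by
      have : (k : ℝ) ≤ L.card := by linarith
      exact_mod_cast this
    have hcmp := compare (by omega : 2 ≤ k) hn1 G hG L hLk x (1 - 8 * θ) (by linarith) hxc hx1 hq
    rw [← hcut.1] at hcmp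
    have hsumL : ∑ a ∈ L, (degIn G L a : ℝ) ≤ ((k : ℝ) - 2) * L.card + A.card := by
      have h1 : ∀ a ∈ L, (degIn G L a : ℝ) ≤
          ((k : ℝ) - 2) + (if degIn G L a = k - 1 then 1 else 0) := by
        intro a ha
        have h := hdL a ha
        split_ifs with h2
        · have : degIn G L a + 1 ≤ k := h
          have : (degIn G L a : ℝ) + 1 ≤ k := by exact_mod_cast this
          linarith
        · have : degIn G L a + 2 ≤ k := by omega
          have : (degIn G L a : ℝ) + 2 ≤ k := by exact_mod_cast this
          linarith
      refine (Finset.sum_le_sum h1).trans ?_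
      rw [Finset.sum_add_distrib, Finset.sum_const, nsmul_eq_mul, hA, Finset.card_filter]
      push_cast
      linarith
    have hLn : (L.card : ℝ) ≤ n := by
      have := Finset.card_le_univ L
      rw [Fintype.card_fin] at this
      exact_mod_cast this
    have hLk' : (k : ℝ) ≤ L.card := by exact_mod_cast hLk
    have hc2 : (1 - 16 * θ) * (((k : ℝ) - 1) * (L.card - k)) ≤
        (1 - 8 * θ) ^ 2 * (((k : ℝ) - 1) * (L.card - k)) := by
      apply mul_le_mul_of_nonneg_right
      · nlinarith [sq_nonneg θ]
      · exact mul_nonneg (by linarith) (by linarith)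
    have hprod : ((k : ℝ) - 1) * (L.card - k) ≤ k * n :=
      mul_le_mul (by linarith) (by linarith) (by linarith) hk0.le
    have hprod2 : θ * (((k : ℝ) - 1) * (L.card - k)) ≤ θ * (k * n) :=
      mul_le_mul_of_nonneg_left hprod hθ.le
    have hprod3 : θ * (k * n) = θ * k * n := by ring
    linarith
  refine ⟨?_, ?_⟩
  · rw [← hA]
    have : (4 : ℝ) * k ^ 2 + 1 ≤ A.card := by nlinarith
    exact_mod_cast this
  -- at most one edge in the other side
  intro p hp q hq' r hr s hs hpq hrs e1 e2
  obtain ⟨F, hF⟩ : ∃ F : Finset (Fin n), F = {p, q, r, s} := ⟨_, rfl⟩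
  have hFc : F.card ≤ 4 := by rw [hF]; exact Finset.card_le_four
  have hFR : ∀ z ∈ F, z ∈ R := by
    intro z hz
    rw [hF] at hz
    simp only [Finset.mem_insert, Finset.mem_singleton] at hz
    rcases hz with rfl | rfl | rfl | rfl <;> assumption
  have hcom := common G L F (4 * θ * n) (fun z hz => hmsR z (hFR z hz))
  obtain ⟨L', hL'⟩ : ∃ L' : Finset (Fin n), L' = L.filter (fun l => ∀ z ∈ F, G.Adj z l) := ⟨_, rfl⟩
  rw [← hL'] at hcom
  have hL'L : L' ⊆ L := by rw [hL']; exact Finset.filter_subset _ _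
  obtain ⟨M, hM⟩ : ∃ M : Finset (Fin n), M = L \ L' := ⟨_, rfl⟩
  have hMc : (M.card : ℝ) ≤ 16 * (θ * n) := by
    have h := Finset.card_sdiff_add_card_eq_card hL'L
    rw [← hM] at h
    have h' : (M.card : ℝ) + L'.card = L.card := by exact_mod_cast h
    have hFc' : (F.card : ℝ) ≤ 4 := by exact_mod_cast hFc
    have h1 : (F.card : ℝ) * (4 * θ * n) ≤ 4 * (4 * θ * n) :=
      mul_le_mul_of_nonneg_right hFc' (by positivity)
    linarith
  obtain ⟨K, hK⟩ : ∃ K : Finset (Fin n),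
    K = M ∪ M.biUnion (fun m => L.filter (fun u => G.Adj m u)) := ⟨_, rfl⟩
  have hKc : K.card ≤ M.card + M.card * k := by
    rw [hK]
    refine (Finset.card_union_le _ _).trans ?_
    refine Nat.add_le_add_left (Finset.card_biUnion_le_card_mul _ _ _ ?_) _
    intro m hm
    rw [hM] at hm
    exact (hdL m (Finset.mem_sdiff.1 hm).1).le
  have hKA : K.card < A.card := by
    have h1 : (K.card : ℝ) ≤ M.card + M.card * k := by exact_mod_cast hKc
    have h2 : (M.card : ℝ) * k ≤ 16 * (θ * n) * k := mul_le_mul_of_nonneg_right hMc hk0.le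
    have h3 : 16 * (θ * n) * k = 16 * (θ * k * n) := by ring
    have : (K.card : ℝ) < A.card := by linarith
    exact_mod_cast this
  obtain ⟨v, hvA, hvK⟩ := Finset.exists_mem_notMem_of_card_lt_card hKA
  rw [hA, Finset.mem_filter] at hvA
  rw [hK, Finset.mem_union, not_or] at hvK
  obtain ⟨C, hC⟩ : ∃ C : Finset (Fin n), C = R.filter (fun c =>
      ∀ q ∈ insert v (L.filter (fun u => G.Adj v u)), G.Adj q c) := ⟨_, rfl⟩
  obtain ⟨_, hC2⟩ := key v hvA.1 hvA.2 C hC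
  have hnotM : ∀ l ∈ L, l ∉ M → ∀ z ∈ F, G.Adj l z := by
    intro l hl hlM z hz
    have : l ∈ L' := by
      by_contra h
      exact hlM (by rw [hM]; exact Finset.mem_sdiff.2 ⟨hl, h⟩)
    rw [hL', Finset.mem_filter] at this
    exact (this.2 z hz).symm
  have hFC : ∀ z ∈ F, z ∈ C := by
    intro z hz
    rw [hC]
    refine Finset.mem_filter.2 ⟨hFR z hz, ?_⟩
    intro t ht
    rcases Finset.mem_insert.1 ht with h | h
    · rw [h]
      exact hnotM v hvA.1 hvK.1 z hz
    · obtain ⟨htL, hvt⟩ := Finset.mem_filter.1 h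
      refine hnotM t htL ?_ z hz
      intro htM
      exact hvK.2 (Finset.mem_biUnion.2 ⟨t, htM, Finset.mem_filter.2 ⟨hvA.1, hvt.symm⟩⟩)
  exact hC2 p (hFC p (by simp [hF])) q (hFC q (by simp [hF])) r (hFC r (by simp [hF]))
    s (hFC s (by simp [hF])) hpq hrs e1 e2


end WheelAux

/-- If `L` has a vertex of internal degree `k - 1`, then it has at
least `4k² + 1` of them, and `G[R]` has at most one edge. -/
theorem many_max_internal_degree (k : ℕ) (hk : 3 ≤ k) (hk4 : k ≠ 4) (hk5 : k ≠ 5) :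
    ∃ N : ℕ, ∀ n : ℕ, N ≤ n → ∀ G : SimpleGraph (Fin n), IsSpexWheel (2 * k + 1) G →
      ∀ L R : Finset (Fin n), IsMaxCut G L R →
        (∃ v ∈ L, degIn G L v = k - 1) →
        4 * k ^ 2 + 1 ≤ {v : Fin n | v ∈ L ∧ degIn G L v = k - 1}.ncard ∧
        edgeCount (G.induce (R : Set (Fin n))) ≤ 1 := by
  obtain ⟨N, hN⟩ := WheelAux.final k hk
  refine ⟨N, fun n hn G hG L R hcut hv => ?_⟩
  obtain ⟨h1, h2⟩ := hN n hn G hG L R hcut hv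
  classical
  refine ⟨?_, ?_⟩
  · have h3 : {v : Fin n | v ∈ L ∧ degIn G L v = k - 1} =
        ((L.filter (fun v => degIn G L v = k - 1) : Finset (Fin n)) : Set (Fin n)) := by
      ext v
      simp
    rw [h3, Set.ncard_coe_finset]
    convert h1
  · unfold edgeCount
    rw [Finset.card_le_one]
    intro e he f hf
    rw [SimpleGraph.mem_edgeFinset] at he hf
    revert he hf
    refine Sym2.ind (fun p q => ?_) e
    refine Sym2.ind (fun r s => ?_) f
    intro he hf
    rw [SimpleGraph.mem_edgeSet] at he hf
    by_contra hne
    refine h2 p.1 p.2 q.1 q.2 r.1 r.2 s.1 s.2 he hf ?_ ?_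
    · rintro ⟨a, b⟩
      exact hne (by rw [Subtype.ext a, Subtype.ext b])
    · rintro ⟨a, b⟩
      exact hne (by rw [Subtype.ext a, Subtype.ext b, Sym2.eq_swap])
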